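/- arXiv:1009.5375 — 7 statements merged into one kernel-verified Lean document; each statement's English description precedes it below -/
import Mathlib

section
/- Let p > 3 be a prime. Then ∑_{k=1}^{(p-1)/2} (21k − 8)/(k³ · C(2k,k)³) ≡ (-1)^{(p+1)/2} · 4·E_{p-3} (mod p). -/
/-- `H n` is the harmonic number `∑_{k=1}^n 1/k`. -/
def H (n : ℕ) : ℚ := ∑ k ∈ Finset.Icc 1 n, (1 : ℚ) / k

/-- `H2 n` is the second-order harmonic number `∑_{k=1}^n 1/k²`. -/
def H2 (n : ℕ) : ℚ := ∑ k ∈ Finset.Icc 1 n, (1 : ℚ) / k ^ 2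

/-- The Euler numbers: `E 0 = 1` and `∑_{0 ≤ k ≤ n, k even} C(n,k) E_{n-k} = 0` for `n ≥ 1`. -/
def eulerNumber : ℕ → ℚ
  | 0 => 1
  | n + 1 =>
      -∑ j ∈ (Finset.range (n + 1)).attach,
        if Even (n + 1 - j.1) then ((n + 1).choose (n + 1 - j.1) : ℚ) * eulerNumber j.1 else 0
decreasing_by exact Finset.mem_range.mp j.2

/-- For rationals, `a ≡ b (mod m)` : `m` divides the numerator of `a - b` in lowest terms. -/
def ratModEq (m : ℕ) (a b : ℚ) : Prop := (m : ℤ) ∣ (a - b).num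


namespace S8
open Finset

section
variable {K : Type*} [Field K]

/-- coefficient -/
def c (K : Type*) [Field K] (n : ℕ) : K := (n.factorial : K) ^ 4 / ((2 * n).factorial : K)
def f (K : Type*) [Field K] (n y : ℕ) : K := ((y.factorial : K) / ((y + n + 1).factorial : K)) ^ 2
def G (K : Type*) [Field K] (n y : ℕ) : K :=
  c K n * f K n y * (2 * (y : K) + 3 * ((n : K) + 1)) / (2 * (2 * (n : K) + 1))
def P (K : Type*) [Field K] (n : ℕ) : K :=
  ∑ k ∈ range n, (k.factorial : K) ^ 2 / ((2 * k + 2).factorial : K)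
def S (K : Type*) [Field K] (n : ℕ) : K :=
  ∑ k ∈ range n, (21 * (k : K) + 13) * ((k : K) + 1) ^ 3 * (k.factorial : K) ^ 6
    / ((2 * k + 2).factorial : K) ^ 3
def T (K : Type*) [Field K] (n M : ℕ) : K := ∑ y ∈ range M, c K n * f K n y
def alt (K : Type*) [Field K] (n : ℕ) : K := ∑ k ∈ range n, (-1) ^ (k + 1) / ((k : K) + 1) ^ 2
def R (K : Type*) [Field K] (M : ℕ) : K :=
  ∑ j ∈ range M, (-1) ^ j * (j.factorial : K) ^ 2 * ((M - 1 - j).factorial : K)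
    / ((M + 1 + j).factorial : K)

lemma fac_ne {m : ℕ} (h : ∀ i, 0 < i → i ≤ m → (i : K) ≠ 0) : (m.factorial : K) ≠ 0 := by
  induction m with
  | zero => simp
  | succ m ih =>
    rw [Nat.factorial_succ]; push_cast
    refine mul_ne_zero ?_ (ih fun i h1 h2 => h i h1 (by omega))
    exact_mod_cast h (m + 1) (by omega) le_rfl

lemma fac2 (n : ℕ) : (((2 * (n + 1)).factorial : ℕ) : K)
    = (2 * n + 2) * ((2 * n + 1) * ((2 * n).factorial : K)) := by
  rw [show 2 * (n + 1) = 2 * n + 1 + 1 by ring, Nat.factorial_succ, Nat.factorial_succ]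
  push_cast; ring

lemma key {n y : ℕ} (h : ∀ i, 0 < i → i ≤ y + n + 2 → (i : K) ≠ 0)
    (h' : ∀ i, 0 < i → i ≤ 2 * n + 2 → (i : K) ≠ 0) :
    c K (n + 1) * f K (n + 1) y = c K n * f K n y + (G K n (y + 1) - G K n y) := by
  have a1 : ((y + n + 1).factorial : K) ≠ 0 := fac_ne fun i h1 h2 => h i h1 (by omega)
  have a2 : ((2 * n).factorial : K) ≠ 0 := fac_ne fun i h1 h2 => h' i h1 (by omega)
  have a3 : ((y : K) + n + 2) ≠ 0 := by exact_mod_cast h (y + n + 2) (by omega) le_rfl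
  have a4 : (2 * (n : K) + 1) ≠ 0 := by exact_mod_cast h' (2 * n + 1) (by omega) (by omega)
  have a5 : (2 : K) ≠ 0 := by exact_mod_cast h' 2 (by omega) (by omega)
  have a6 : ((n : K) + 1) ≠ 0 := by exact_mod_cast h' (n + 1) (by omega) (by omega)
  unfold G c f
  rw [fac2, show y + (n + 1) + 1 = y + n + 1 + 1 by ring, show y + 1 + n + 1 = y + n + 1 + 1 by ring,
    Nat.factorial_succ (y + n + 1), Nat.factorial_succ n, Nat.factorial_succ y]
  push_cast
  have a7 : ((y : K) + n + 1 + 1) ≠ 0 := by convert a3 using 1; ring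
  have a8 : (2 * (n : K) + 2) ≠ 0 := by
    have := mul_ne_zero a5 a6
    convert this using 1; ring
  generalize ((y + n + 1).factorial : K) = u at *
  generalize ((2 * n).factorial : K) = v at *
  generalize ((n).factorial : K) = w at *
  generalize ((y).factorial : K) = z at *
  generalize (y : K) = Y at *
  generalize (n : K) = x at *
  have : (2 * x + 2) = 2 * (x + 1) := by ring
  rw [this]
  generalize ht : 2 * x + 1 = t at *
  field_simp
  rw [← ht]
  ring

lemma T_step {n M : ℕ} (h : ∀ i, 0 < i → i ≤ M + n + 1 → (i : K) ≠ 0)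
    (h' : ∀ i, 0 < i → i ≤ 2 * n + 2 → (i : K) ≠ 0) :
    T K (n + 1) M = T K n M + (G K n M - G K n 0) := by
  unfold T
  rw [← sum_range_sub, ← sum_add_distrib]
  refine sum_congr rfl fun y hy => key (fun i h1 h2 => h i h1 ?_) h'
  have := mem_range.1 hy; omega

lemma S_eq {n : ℕ} (h : ∀ i, 0 < i → i ≤ 2 * n → (i : K) ≠ 0) :
    S K n = T K n n + 3 * P K n := by
  induction n with
  | zero => simp [S, T, P]
  | succ n ih =>
    have h' : ∀ i, 0 < i → i ≤ 2 * n + 2 → (i : K) ≠ 0 := fun i h1 h2 => h i h1 (by omega)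
    have e1 : S K (n + 1) = S K n + (21 * (n : K) + 13) * ((n : K) + 1) ^ 3 * (n.factorial : K) ^ 6
        / ((2 * n + 2).factorial : K) ^ 3 := by unfold S; rw [sum_range_succ]
    have e2 : P K (n + 1) = P K n + (n.factorial : K) ^ 2 / ((2 * n + 2).factorial : K) := by
      unfold P; rw [sum_range_succ]
    have e3 : T K (n + 1) (n + 1) = T K (n + 1) n + c K (n + 1) * f K (n + 1) n := by
      unfold T; rw [sum_range_succ]
    rw [e1, e2, e3, ih (fun i h1 h2 => h i h1 (by omega)),
      T_step (fun i h1 h2 => h i h1 (by omega)) h']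
    have a2 : ((2 * n).factorial : K) ≠ 0 := fac_ne fun i h1 h2 => h' i h1 (by omega)
    have a1 : (n.factorial : K) ≠ 0 := fac_ne fun i h1 h2 => h' i h1 (by omega)
    have a4 : (2 * (n : K) + 1) ≠ 0 := by exact_mod_cast h' (2 * n + 1) (by omega) (by omega)
    have a5 : (2 : K) ≠ 0 := by exact_mod_cast h' 2 (by omega) (by omega)
    have a6 : ((n : K) + 1) ≠ 0 := by exact_mod_cast h' (n + 1) (by omega) (by omega)
    unfold G c f
    rw [show n + (n + 1) + 1 = 2 * (n + 1) by ring, show 2 * n + 2 = 2 * (n + 1) by ring, fac2,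
      show n + n + 1 = 2 * n + 1 by ring, Nat.factorial_succ (2 * n), show 0 + n + 1 = n + 1 by ring,
      Nat.factorial_succ n, Nat.factorial_zero]
    push_cast
    generalize ((2 * n).factorial : K) = v at *
    generalize ((n).factorial : K) = w at *
    generalize (n : K) = x at *
    have : (2 * x + 2) = 2 * (x + 1) := by ring
    rw [this]
    generalize ht : 2 * x + 1 = t at *
    field_simp
    rw [← ht]
    ring

lemma alt_eq {M : ℕ} (h : ∀ i, 0 < i → i ≤ 2 * M → (i : K) ≠ 0) :
    2 * alt K M = - 3 * P K M + (-1) ^ M * R K M := by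
  induction M with
  | zero => simp [alt, R, P]
  | succ M ih =>
    have h' : ∀ i, 0 < i → i ≤ 2 * M + 2 → (i : K) ≠ 0 := fun i h1 h2 => h i h1 (by omega)
    have a2 : ((2 * M).factorial : K) ≠ 0 := fac_ne fun i h1 h2 => h' i h1 (by omega)
    have a1 : (M.factorial : K) ≠ 0 := fac_ne fun i h1 h2 => h' i h1 (by omega)
    have a4 : (2 * (M : K) + 1) ≠ 0 := by exact_mod_cast h' (2 * M + 1) (by omega) (by omega)
    have a5 : (2 : K) ≠ 0 := by exact_mod_cast h' 2 (by omega) (by omega)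
    have a6 : ((M : K) + 1) ≠ 0 := by exact_mod_cast h' (M + 1) (by omega) (by omega)
    have e1 : alt K (M + 1) = alt K M + (-1) ^ (M + 1) / ((M : K) + 1) ^ 2 := by
      unfold alt; rw [sum_range_succ]
    have e2 : P K (M + 1) = P K M + (M.factorial : K) ^ 2 / ((2 * M + 2).factorial : K) := by
      unfold P; rw [sum_range_succ]
    let H : ℕ → K := fun k => (-1) ^ k * (k.factorial : K) ^ 2 * ((M - k).factorial : K)
      / ((M + 1 + k).factorial : K) * 2 / ((M : K) + 1)
    have e3 : R K (M + 1) = - R K M + (H 0 - H M) + (-1) ^ M * (M.factorial : K) ^ 2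
        / ((2 * M + 2).factorial : K) := by
      unfold R
      rw [sum_range_succ, ← sum_range_sub', ← sum_neg_distrib, ← sum_add_distrib]
      congr 1
      · refine sum_congr rfl fun j hj => ?_
        obtain ⟨d, rfl⟩ : ∃ d, M = j + d + 1 := ⟨M - 1 - j, by have := mem_range.1 hj; omega⟩
        simp only [H]
        rw [show j + d + 1 + 1 - 1 - j = d + 1 by omega, show j + d + 1 - 1 - j = d by omega,
          show j + d + 1 - j = d + 1 by omega, show j + d + 1 - (j + 1) = d by omega,
          show j + d + 1 + 1 + 1 + j = (j + d + 1 + 1 + j) + 1 by ring,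
          show j + d + 1 + 1 + (j + 1) = (j + d + 1 + 1 + j) + 1 by ring,
          Nat.factorial_succ d, Nat.factorial_succ (j + d + 1 + 1 + j), Nat.factorial_succ j]
        have b1 : ((j + d + 1 + 1 + j).factorial : K) ≠ 0 :=
          fac_ne fun i h1 h2 => h' i h1 (by omega)
        have b2 : ((j + d + 1 + 1 + j + 1 : ℕ) : K) ≠ 0 := h' _ (by omega) (by omega)
        push_cast at b2 a6 ⊢
        generalize ((j + d + 1 + 1 + j).factorial : K) = u at *
        field_simp
        ring
      · rw [show M + 1 - 1 - M = 0 by omega, show M + 1 + 1 + M = 2 * M + 2 by ring]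
        simp
    have ih' := ih (fun i h1 h2 => h i h1 (by omega))
    rw [e1, e2, e3, mul_add, ih']
    simp only [H]
    rw [show 2 * M + 2 = 2 * (M + 1) by ring, fac2, show M + 1 + M = 2 * M + 1 by ring,
      Nat.factorial_succ (2 * M), show M + 1 + 0 = M + 1 by ring, Nat.sub_self, Nat.sub_zero,
      Nat.factorial_succ M, Nat.factorial_zero]
    push_cast
    have sq : ((-1 : K) ^ M) ^ 2 = 1 := by rw [← pow_mul, mul_comm, pow_mul]; simp
    rw [pow_succ]
    generalize ((-1 : K) ^ M) = s at *
    generalize ((2 * M).factorial : K) = v at *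
    generalize ((M).factorial : K) = w at *
    generalize (M : K) = x at *
    generalize R K M = r at *
    have : (2 * x + 2) = 2 * (x + 1) := by ring
    rw [this]
    field_simp
    ring_nf
    simp only [sq]
    ring
end

end S8

namespace S8
open Finset

section
variable {p : ℕ} [hpf : Fact p.Prime]

lemma cast_ne {i : ℕ} (h0 : 0 < i) (h1 : i < p) : (i : ZMod p) ≠ 0 := by
  rw [Ne, ZMod.natCast_eq_zero_iff]
  exact fun h => absurd (Nat.le_of_dvd h0 h) (by omega)

lemma fac_mul {a b : ℕ} (h : a + b + 1 = p) :
    (a.factorial : ZMod p) * (b.factorial : ZMod p) = (-1) ^ (a + 1) := by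
  induction a generalizing b with
  | zero =>
    have := ZMod.wilsons_lemma p
    rw [show p - 1 = b by omega] at this
    simp [this]
  | succ a ih =>
    have h1 := ih (b := b + 1) (by omega)
    rw [Nat.factorial_succ] at h1 ⊢
    have h2 : ((a + b + 2 : ℕ) : ZMod p) = 0 := by
      rw [show a + b + 2 = p by omega]; simp
    rw [pow_succ, ← h1]
    push_cast at h2 ⊢
    linear_combination (a.factorial : ZMod p) * (b.factorial : ZMod p) * h2

lemma negsq (n : ℕ) : ((-1 : ZMod p) ^ n) ^ 2 = 1 := by rw [← pow_mul, mul_comm, pow_mul]; simp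

lemma pow_inv (hp3 : 3 < p) {x : ZMod p} (hx : x ≠ 0) : x ^ (p - 3) = 1 / x ^ 2 := by
  have h := ZMod.pow_card_sub_one_eq_one hx
  rw [show p - 1 = (p - 3) + 2 by omega, pow_add] at h
  field_simp
  exact h

lemma R_eq {N : ℕ} (hp : p = 2 * N + 1) :
    (-1) ^ N * R (ZMod p) N = - T (ZMod p) N N := by
  unfold R T
  rw [mul_sum, ← sum_neg_distrib]
  refine sum_congr rfl fun j hj => ?_
  have hj := mem_range.1 hj
  have h1 := fac_mul (p := p) (a := N + 1 + j) (b := N - 1 - j) (by omega)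
  have h2 := fac_mul (p := p) (a := N) (b := N) (by omega)
  have h3 := fac_mul (p := p) (a := 0) (b := 2 * N) (by omega)
  have n2 : ((N + 1 + j).factorial : ZMod p) ≠ 0 := fac_ne fun i h1 h2 => cast_ne h1 (by omega)
  have hc : c (ZMod p) N = -1 := by
    unfold c
    have : ((2 * N).factorial : ZMod p) = -1 := by simpa using h3
    rw [this, show (N.factorial : ZMod p) ^ 4
      = ((N.factorial : ZMod p) * (N.factorial : ZMod p)) ^ 2 by ring, h2, negsq]
    simp
  have h4 : ((N - 1 - j).factorial : ZMod p) = (-1) ^ (N + 1 + j + 1) / ((N + 1 + j).factorial : ZMod p) := by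
    rw [← h1]; field_simp
  rw [hc, h4]
  unfold f
  rw [show j + N + 1 = N + 1 + j by ring]
  field_simp
  linear_combination (j.factorial : ZMod p) ^ 2 * negsq (p := p) (N + j + 1)

end
end S8

namespace S8
open Finset

lemma euler_rec (n : ℕ) : eulerNumber (n + 1) = -∑ j ∈ range (n + 1),
    if Even (n + 1 - j) then ((n + 1).choose (n + 1 - j) : ℚ) * eulerNumber j else 0 := by
  rw [eulerNumber]
  congr 1
  exact sum_attach (range (n + 1)) (fun j =>
    if Even (n + 1 - j) then ((n + 1).choose (n + 1 - j) : ℚ) * eulerNumber j else 0)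

lemma euler_int (n : ℕ) : ∃ z : ℤ, eulerNumber n = z := by
  induction n using Nat.strong_induction_on with
  | _ n ih =>
    rcases n with _ | n
    · exact ⟨1, by rw [eulerNumber]; simp⟩
    · choose! e he using ih
      refine ⟨-∑ j ∈ range (n + 1),
        if Even (n + 1 - j) then ((n + 1).choose (n + 1 - j) : ℤ) * e j else 0, ?_⟩
      rw [euler_rec]
      push_cast
      congr 1
      refine sum_congr rfl fun j hj => ?_
      rw [he j (mem_range.1 hj)]

lemma euler_seq : ∃ e : ℕ → ℤ, (∀ n, eulerNumber n = e n) ∧ e 0 = 1 ∧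
    ∀ n, ∑ j ∈ range (n + 2), (if Even (n + 1 - j) then ((n + 1).choose j : ℤ) * e j else 0) = 0 := by
  choose e he using euler_int
  refine ⟨e, he, ?_, fun n => ?_⟩
  · have := he 0
    rw [eulerNumber] at this
    exact_mod_cast this.symm
  · have h := euler_rec n
    rw [sum_range_succ]
    have : ((∑ j ∈ range (n + 1), (if Even (n + 1 - j) then ((n + 1).choose j : ℤ) * e j else 0) : ℤ) : ℚ)
        = - eulerNumber (n + 1) := by
      rw [h, neg_neg]
      push_cast
      refine sum_congr rfl fun j hj => ?_
      rw [he j, Nat.choose_symm (by have := mem_range.1 hj; omega)]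
    rw [he] at this
    have h2 : (∑ j ∈ range (n + 1), (if Even (n + 1 - j) then ((n + 1).choose j : ℤ) * e j else 0) : ℤ)
      = - e (n + 1) := by exact_mod_cast this
    rw [h2]; simp

lemma euler_odd {e : ℕ → ℤ} (he : ∀ n, ∑ j ∈ range (n + 2),
    (if Even (n + 1 - j) then ((n + 1).choose j : ℤ) * e j else 0) = 0) (n : ℕ) (hn : Odd n) :
    e n = 0 := by
  induction n using Nat.strong_induction_on with
  | _ n ih =>
    rcases n with _ | n
    · simp at hn
    · have h := he n
      rw [sum_range_succ, sum_eq_zero] at h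
      · simpa using h
      · intro j hj
        have hj := mem_range.1 hj
        split_ifs with hE
        · have : Odd j := by
            rw [Nat.even_sub (by omega)] at hE
            rw [← Nat.not_even_iff_odd] at hn ⊢
            tauto
          rw [ih j (by omega) this, mul_zero]
        · rfl

section
variable {K : Type*} [Field K]
open Polynomial

/-- umbral functional -/
noncomputable def L (e : ℕ → K) : K[X] →ₗ[K] K :=
  Polynomial.lsum fun j => LinearMap.toSpanSingleton K K (e j)

lemma L_X (e : ℕ → K) (j : ℕ) : L e (X ^ j) = e j := by
  rw [L, Polynomial.lsum_apply, ← Polynomial.monomial_one_right_eq_X_pow, Polynomial.sum_monomial_index]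
  · simp
  · simp

lemma L_add_pow (e : ℕ → K) (a : K) (n : ℕ) : L e ((X + C a) ^ n)
    = ∑ j ∈ range (n + 1), (n.choose j : K) * (a ^ (n - j) * e j) := by
  rw [add_pow, map_sum]
  refine sum_congr rfl fun j _ => ?_
  rw [show (X ^ j * C a ^ (n - j) * ((n.choose j : ℕ) : K[X]) : K[X])
    = ((n.choose j : K) * a ^ (n - j)) • X ^ j by
      rw [Polynomial.smul_eq_C_mul]; simp; ring, map_smul, L_X, smul_eq_mul]
  ring

lemma L_one {e : ℕ → ℤ} (he : ∀ n, ∑ j ∈ range (n + 2),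
    (if Even (n + 1 - j) then ((n + 1).choose j : ℤ) * e j else 0) = 0) (h0 : e 0 = 1) (n : ℕ) :
    L (fun j => (e j : K)) ((X + C 1) ^ n) + L (fun j => (e j : K)) ((X + C (-1)) ^ n)
      = 2 * 0 ^ n := by
  rcases n with _ | n
  · rw [L_add_pow, L_add_pow]; simp [h0]; norm_num
  · rw [L_add_pow, L_add_pow, ← sum_add_distrib]
    have h := congrArg (fun z : ℤ => 2 * (z : K)) (he n)
    simp only [Int.cast_zero, mul_zero] at h
    rw [zero_pow (by omega), mul_zero, ← h]
    push_cast
    rw [mul_sum]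
    refine sum_congr rfl fun j hj => ?_
    split_ifs with hE
    · rw [hE.neg_one_pow]; simp; ring
    · rw [(Nat.not_even_iff_odd.1 hE).neg_one_pow]; simp

lemma L_comp {e : ℕ → ℤ} (he : ∀ n, ∑ j ∈ range (n + 2),
    (if Even (n + 1 - j) then ((n + 1).choose j : ℤ) * e j else 0) = 0) (h0 : e 0 = 1) (f : K[X]) :
    L (fun j => (e j : K)) (f.comp (X + C 1)) + L (fun j => (e j : K)) (f.comp (X + C (-1)))
      = 2 * f.eval 0 := by
  induction f using Polynomial.induction_on' with
  | add f g hf hg =>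
    simp only [add_comp, map_add, eval_add]
    linear_combination hf + hg
  | monomial n a =>
    have h := L_one (K := K) he h0 n
    rw [← C_mul_X_pow_eq_monomial]
    simp only [mul_comp, C_comp, pow_comp, X_comp, eval_mul, eval_C, eval_pow, eval_X]
    rw [← smul_eq_C_mul, ← smul_eq_C_mul, map_smul, map_smul, smul_eq_mul, smul_eq_mul]
    linear_combination a * h

lemma L_step {e : ℕ → ℤ} (he : ∀ n, ∑ j ∈ range (n + 2),
    (if Even (n + 1 - j) then ((n + 1).choose j : ℤ) * e j else 0) = 0) (h0 : e 0 = 1)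
    (a : K) (n : ℕ) :
    L (fun j => (e j : K)) ((X + C (a + 1)) ^ n) + L (fun j => (e j : K)) ((X + C (a - 1)) ^ n)
      = 2 * a ^ n := by
  have h := L_comp (K := K) he h0 ((X + C a) ^ n)
  have e1 : ((X + C a) ^ n).comp (X + C 1) = (X + C (a + 1)) ^ n := by
    simp only [pow_comp, add_comp, X_comp, C_comp, C_add]; ring
  have e2 : ((X + C a) ^ n).comp (X + C (-1)) = (X + C (a - 1)) ^ n := by
    simp only [pow_comp, add_comp, X_comp, C_comp, C_sub, C_neg]; ring
  rw [e1, e2] at h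
  rw [h]; simp

lemma L_sum {e : ℕ → ℤ} (he : ∀ n, ∑ j ∈ range (n + 2),
    (if Even (n + 1 - j) then ((n + 1).choose j : ℤ) * e j else 0) = 0) (h0 : e 0 = 1)
    {n : ℕ} (hn : Even n) (hn0 : 0 < n) (m : ℕ) :
    (-1) ^ m * L (fun j => (e j : K)) ((X + C (2 * (m : K) + 1)) ^ n)
      = ∑ i ∈ range m, (-1) ^ (i + 1) * (2 * (2 * ((i : K) + 1)) ^ n) := by
  induction m with
  | zero =>
    simp only [pow_zero, one_mul, Nat.cast_zero, mul_zero, zero_add, range_zero, sum_empty]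
    rw [L_add_pow]
    obtain ⟨k, rfl⟩ : ∃ k, n = k + 1 := ⟨n - 1, by omega⟩
    have h := congrArg (fun z : ℤ => (z : K)) (he k)
    simp only [Int.cast_zero] at h
    rw [← h]
    push_cast
    refine sum_congr rfl fun j hj => ?_
    have hj := mem_range.1 hj
    split_ifs with hE
    · simp
    · have : Odd j := by
        rw [Nat.even_sub (by omega)] at hE
        rw [← Nat.not_even_iff_odd]
        tauto
      rw [euler_odd he j this]; simp
  | succ m ih =>
    have h := L_step (K := K) he h0 (2 * (m + 1)) n
    rw [sum_range_succ, ← ih]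
    push_cast
    rw [show (2 * ((m : K) + 1) - 1) = 2 * m + 1 by ring] at h
    rw [pow_succ]
    linear_combination (-1) ^ m * (-1) * h
end

lemma euler_mod {p : ℕ} [Fact p.Prime] {N : ℕ} (hp : p = 2 * N + 1) (hp3 : 3 < p)
    {e : ℕ → ℤ} (he : ∀ n, ∑ j ∈ range (n + 2),
    (if Even (n + 1 - j) then ((n + 1).choose j : ℤ) * e j else 0) = 0) (h0 : e 0 = 1) :
    (-1) ^ N * 2 * (e (p - 3) : ZMod p) = alt (ZMod p) N := by
  have h := L_sum (K := ZMod p) he h0 (n := p - 3) ⟨N - 1, by omega⟩ (by omega) N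
  have hz : (2 * (N : ZMod p) + 1) = 0 := by
    have : ((2 * N + 1 : ℕ) : ZMod p) = 0 := by rw [← hp]; simp
    exact_mod_cast this
  rw [hz, Polynomial.C_0, add_zero, L_X] at h
  have h2 : (2 : ZMod p) ≠ 0 := by exact_mod_cast cast_ne (p := p) (i := 2) (by omega) (by omega)
  have : (-1) ^ N * 2 * (e (p - 3) : ZMod p) = 2 * ((-1) ^ N * (e (p - 3) : ZMod p)) := by ring
  rw [this, h, mul_sum]
  unfold alt
  refine sum_congr rfl fun i hi => ?_
  have hi := mem_range.1 hi
  have h3 : ((i : ZMod p) + 1) ≠ 0 := by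
    exact_mod_cast cast_ne (p := p) (i := i + 1) (by omega) (by omega)
  rw [pow_inv hp3 (mul_ne_zero h2 h3)]
  field_simp
  try ring

/-- reduction of a rational number modulo `p` -/
def Red (p : ℕ) [Fact p.Prime] (q : ℚ) (z : ZMod p) : Prop :=
  ∃ a b : ℤ, (b : ZMod p) ≠ 0 ∧ q = a / b ∧ z = a / b

section
variable {p : ℕ} [hpf : Fact p.Prime]

lemma ne_of_cast {b : ℤ} (h : (b : ZMod p) ≠ 0) : (b : ℚ) ≠ 0 := by
  intro h'
  have : b = 0 := by exact_mod_cast h'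
  simp [this] at h

lemma Red.add {q q' : ℚ} {z z' : ZMod p} (h : Red p q z) (h' : Red p q' z') :
    Red p (q + q') (z + z') := by
  obtain ⟨a, b, hb, rfl, rfl⟩ := h
  obtain ⟨a', b', hb', rfl, rfl⟩ := h'
  refine ⟨a * b' + b * a', b * b', ?_, ?_, ?_⟩
  · push_cast; exact mul_ne_zero hb hb'
  · push_cast; exact div_add_div _ _ (ne_of_cast hb) (ne_of_cast hb')
  · push_cast; exact div_add_div _ _ hb hb'

lemma Red.int (a : ℤ) : Red p a a := ⟨a, 1, by simp, by simp, by simp⟩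

lemma Red.sum {g : ℕ → ℚ} {g' : ℕ → ZMod p} (N : ℕ) (h : ∀ k < N, Red p (g k) (g' k)) :
    Red p (∑ k ∈ range N, g k) (∑ k ∈ range N, g' k) := by
  induction N with
  | zero => simpa using Red.int (p := p) 0
  | succ N ih =>
    rw [sum_range_succ, sum_range_succ]
    exact (ih fun k hk => h k (by omega)).add (h N (by omega))

lemma Red.dvd {q : ℚ} (h : Red p q 0) : (p : ℤ) ∣ q.num := by
  obtain ⟨a, b, hb, hq, hz⟩ := h
  have ha : (a : ZMod p) = 0 := by
    rcases div_eq_zero_iff.1 hz.symm with h | h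
    · exact h
    · exact absurd h hb
  have hb0 := ne_of_cast hb
  rw [ZMod.intCast_zmod_eq_zero_iff_dvd] at ha
  have hb' : ¬ (p : ℤ) ∣ b := by rwa [← ZMod.intCast_zmod_eq_zero_iff_dvd]
  have e : q.num * b = a * q.den := by
    have h1 : (q.num : ℚ) = q * q.den := (Rat.mul_den_eq_num q).symm
    have : (q.num : ℚ) * b = a * q.den := by
      rw [h1]
      nth_rewrite 1 [hq]
      field_simp
    exact_mod_cast this
  have hd : (p : ℤ) ∣ q.num * b := by rw [e]; exact ha.mul_right _
  exact ((Nat.prime_iff_prime_int.1 hpf.out).dvd_or_dvd hd).resolve_right hb'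

lemma Red.term {k N : ℕ} (hp : p = 2 * N + 1) (hk : k < N) :
    Red p ((21 * ((k + 1 : ℕ) : ℚ) - 8) / (((k + 1 : ℕ) : ℚ) ^ 3 *
      ((2 * (k + 1)).choose (k + 1) : ℚ) ^ 3))
      ((21 * (k : ZMod p) + 13) * ((k : ZMod p) + 1) ^ 3 * (k.factorial : ZMod p) ^ 6
    / ((2 * k + 2).factorial : ZMod p) ^ 3) := by
  have hC : ((2 * (k + 1)).choose (k + 1) : ZMod p) * (((k : ZMod p) + 1) * (k.factorial : ZMod p)) ^ 2
      = ((2 * k + 2).factorial : ZMod p) := by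
    have := Nat.choose_mul_factorial_mul_factorial (n := 2 * (k + 1)) (k := k + 1) (by omega)
    rw [show 2 * (k + 1) - (k + 1) = k + 1 by omega, Nat.factorial_succ k] at this
    rw [show 2 * k + 2 = 2 * (k + 1) by ring, ← this]
    push_cast; ring
  have n1 : ((2 * k + 2).factorial : ZMod p) ≠ 0 := fac_ne fun i h1 h2 => cast_ne h1 (by omega)
  have n2 : ((k : ZMod p) + 1) ≠ 0 := by
    exact_mod_cast cast_ne (p := p) (i := k + 1) (by omega) (by omega)
  have n3 : (k.factorial : ZMod p) ≠ 0 := fac_ne fun i h1 h2 => cast_ne h1 (by omega)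
  have n4 : ((2 * (k + 1)).choose (k + 1) : ZMod p) ≠ 0 := by
    intro h; rw [h, zero_mul] at hC; exact n1 hC.symm
  refine ⟨21 * k + 13, (k + 1) ^ 3 * ((2 * (k + 1)).choose (k + 1)) ^ 3, ?_, ?_, ?_⟩
  · push_cast
    exact mul_ne_zero (pow_ne_zero _ n2) (pow_ne_zero _ n4)
  · push_cast; ring
  · rw [← hC]
    push_cast
    field_simp
    try ring

lemma sum_Icc_range (g : ℕ → ℚ) (N : ℕ) :
    ∑ k ∈ Icc 1 N, g k = ∑ k ∈ range N, g (k + 1) := by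
  induction N with
  | zero => simp
  | succ N ih => rw [sum_Icc_succ_top (by omega), ih, sum_range_succ]

end
end S8

theorem stmt8 (p : ℕ) (hp : p.Prime) (hp3 : 3 < p) :
    ratModEq p
      (∑ k ∈ Finset.Icc 1 ((p - 1) / 2),
        (21 * (k : ℚ) - 8) / ((k : ℚ) ^ 3 * ((2 * k).choose k : ℚ) ^ 3))
      ((-1) ^ ((p + 1) / 2) * 4 * eulerNumber (p - 3)) := by
  have : Fact p.Prime := ⟨hp⟩
  obtain ⟨N, hN⟩ : ∃ N, p = 2 * N + 1 := by
    rcases hp.eq_two_or_odd' with h | h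
    · omega
    · exact h
  obtain ⟨e, he, h0, hr⟩ := S8.euler_seq
  have hne : ∀ i, 0 < i → i ≤ 2 * N → (i : ZMod p) ≠ 0 := fun i h1 h2 => S8.cast_ne h1 (by omega)
  have h1 := S8.S_eq hne
  have h2 := S8.alt_eq hne
  have h4 := S8.R_eq hN
  have h5 := S8.euler_mod hN hp3 hr h0
  rw [h4] at h2
  have hfin : S8.S (ZMod p) N + ((-((-1) ^ (N + 1) * 4 * e (p - 3)) : ℤ) : ZMod p) = 0 := by
    push_cast
    rw [pow_succ]
    linear_combination h1 + h2 + 2 * h5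
  unfold ratModEq
  rw [show (p - 1) / 2 = N by omega, show (p + 1) / 2 = N + 1 by omega, S8.sum_Icc_range, he]
  apply S8.Red.dvd
  rw [← hfin, sub_eq_add_neg]
  refine S8.Red.add (S8.Red.sum N fun k hk => S8.Red.term hN hk) ?_
  have := S8.Red.int (p := p) (-((-1) ^ (N + 1) * 4 * e (p - 3)))
  convert this using 1
  push_cast
  ring
end

section
/- For any positive integer n, ∑_{k=1}^n C(n,k) · ((-1)^{k-1}/k) · H_k = H_n^{(2)}. -/
lemma H_succ_aux (n : ℕ) : H (n + 1) = H n + 1 / ((n : ℚ) + 1) := by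
  unfold H
  rw [Finset.sum_Icc_succ_top (by omega)]
  push_cast
  rfl

lemma H2_succ_aux (n : ℕ) : H2 (n + 1) = H2 n + 1 / ((n : ℚ) + 1) ^ 2 := by
  unfold H2
  rw [Finset.sum_Icc_succ_top (by omega)]
  push_cast
  rfl

/-- The absorption identity `C(m,k)/(k+1) = C(m+1,k+1)/(m+1)`. -/
lemma absorb_aux (m k : ℕ) :
    (m.choose k : ℚ) / ((k : ℚ) + 1) = ((m + 1).choose (k + 1) : ℚ) / ((m : ℚ) + 1) := by
  have h : ((m : ℚ) + 1) * (m.choose k : ℚ) = ((m + 1).choose (k + 1) : ℚ) * ((k : ℚ) + 1) := by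
    exact_mod_cast Nat.add_one_mul_choose_eq m k
  have h1 : (m : ℚ) + 1 ≠ 0 := by positivity
  have h2 : (k : ℚ) + 1 ≠ 0 := by positivity
  rw [div_eq_div_iff h2 h1]
  linarith

/-- Alternating sum of the nontrivial binomials. -/
lemma alt_aux (m : ℕ) :
    ∑ k ∈ Finset.range (m + 1), ((m + 1).choose (k + 1) : ℚ) * (-1) ^ k = 1 := by
  have h := Int.alternating_sum_range_choose_of_ne (n := m + 1) (by omega)
  have h3 : ∑ k ∈ Finset.range (m + 1 + 1), (-1 : ℚ) ^ k * ((m + 1).choose k : ℚ) = 0 := by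
    exact_mod_cast h
  rw [Finset.sum_range_succ'] at h3
  have e : ∑ k ∈ Finset.range (m + 1), ((m + 1).choose (k + 1) : ℚ) * (-1) ^ k
      = -∑ k ∈ Finset.range (m + 1), (-1 : ℚ) ^ (k + 1) * ((m + 1).choose (k + 1) : ℚ) := by
    rw [← Finset.sum_neg_distrib]
    refine Finset.sum_congr rfl fun k _ => ?_
    ring
  rw [e]
  simp only [pow_zero, Nat.choose_zero_right, Nat.cast_one, mul_one] at h3
  linarith

/-- Pascal's rule applied to a weighted sum. -/
lemma pascal_aux (m : ℕ) (f : ℕ → ℚ) :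
    ∑ k ∈ Finset.range (m + 1), ((m + 1).choose (k + 1) : ℚ) * f k
      = ∑ k ∈ Finset.range (m + 1), (m.choose k : ℚ) * f k
        + ∑ k ∈ Finset.range m, (m.choose (k + 1) : ℚ) * f k := by
  have e : ∑ k ∈ Finset.range m, (m.choose (k + 1) : ℚ) * f k
      = ∑ k ∈ Finset.range (m + 1), (m.choose (k + 1) : ℚ) * f k := by
    rw [Finset.sum_range_succ]
    simp
  rw [e, ← Finset.sum_add_distrib]
  refine Finset.sum_congr rfl fun k _ => ?_
  rw [Nat.choose_succ_succ]
  push_cast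
  ring

lemma T_aux (m : ℕ) :
    ∑ k ∈ Finset.range (m + 1), ((m + 1).choose (k + 1) : ℚ) * ((-1) ^ k * H (k + 1))
      = 1 / ((m : ℚ) + 1) := by
  rw [pascal_aux m (fun k => (-1) ^ k * H (k + 1))]
  have e1 : ∑ k ∈ Finset.range (m + 1), (m.choose k : ℚ) * ((-1) ^ k * H (k + 1))
      = ∑ k ∈ Finset.range (m + 1), (m.choose k : ℚ) * ((-1) ^ k * H k)
        + (∑ k ∈ Finset.range (m + 1), ((m + 1).choose (k + 1) : ℚ) * (-1) ^ k)
          / ((m : ℚ) + 1) := by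
    rw [Finset.sum_div, ← Finset.sum_add_distrib]
    refine Finset.sum_congr rfl fun k _ => ?_
    rw [H_succ_aux, mul_div_right_comm, ← absorb_aux]
    ring
  have e2 : ∑ k ∈ Finset.range (m + 1), (m.choose k : ℚ) * ((-1) ^ k * H k)
      = -∑ k ∈ Finset.range m, (m.choose (k + 1) : ℚ) * ((-1) ^ k * H (k + 1)) := by
    rw [Finset.sum_range_succ', ← Finset.sum_neg_distrib]
    have h0 : H 0 = 0 := by simp [H]
    rw [h0, mul_zero, mul_zero, add_zero]
    refine Finset.sum_congr rfl fun k _ => ?_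
    ring
  rw [e1, e2, alt_aux]
  ring

lemma S_aux (n : ℕ) :
    ∑ k ∈ Finset.range n, (n.choose (k + 1) : ℚ) * ((-1) ^ k / ((k : ℚ) + 1) * H (k + 1))
      = H2 n := by
  induction n with
  | zero => simp [H2]
  | succ m ih =>
    rw [pascal_aux m (fun k => (-1) ^ k / ((k : ℚ) + 1) * H (k + 1)), ih, H2_succ_aux]
    have e : ∑ k ∈ Finset.range (m + 1),
        (m.choose k : ℚ) * ((-1) ^ k / ((k : ℚ) + 1) * H (k + 1))
        = (∑ k ∈ Finset.range (m + 1), ((m + 1).choose (k + 1) : ℚ) * ((-1) ^ k * H (k + 1)))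
          / ((m : ℚ) + 1) := by
      rw [Finset.sum_div]
      refine Finset.sum_congr rfl fun k _ => ?_
      rw [mul_div_right_comm, ← absorb_aux]
      ring
    rw [e, T_aux, div_div, ← pow_two, add_comm]

theorem stmt10 (n : ℕ) (hn : 0 < n) :
    ∑ k ∈ Finset.Icc 1 n, (n.choose k : ℚ) * ((-1) ^ (k - 1) / k) * H k = H2 n := by
  rw [← S_aux n]
  have h : Finset.Icc 1 n = Finset.Ico 1 (n + 1) := by
    ext k
    simp only [Finset.mem_Icc, Finset.mem_Ico]
    omega
  rw [h, Finset.sum_Ico_eq_sum_range]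
  refine Finset.sum_congr rfl fun k _ => ?_
  rw [add_comm 1 k, Nat.add_sub_cancel]
  push_cast
  ring
end

section
/- For any positive integer n, ∑_{k=1}^n C(n,k) · (-1)^k · H_k^{(2)} = −H_n/n. -/
lemma aux_diff (f : ℕ → ℚ) (m : ℕ) :
    ∑ k ∈ Finset.range (m + 2), ((m + 1).choose k : ℚ) * (-1) ^ k * f k
      = ∑ k ∈ Finset.range (m + 1), (m.choose k : ℚ) * (-1) ^ k * (f k - f (k + 1)) := by
  have h1 : ∑ k ∈ Finset.range (m + 2), (m.choose k : ℚ) * (-1) ^ k * f k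
      = ∑ k ∈ Finset.range (m + 1), (m.choose k : ℚ) * (-1) ^ k * f k := by
    rw [Finset.sum_range_succ]; simp
  have h2 := Finset.sum_range_succ' (fun k => (m.choose k : ℚ) * (-1) ^ k * f k) (m + 1)
  rw [Finset.sum_range_succ']
  simp only [mul_sub, Finset.sum_sub_distrib]
  rw [← h1, h2]
  have h3 : ∀ k, ((m + 1).choose (k + 1) : ℚ) * (-1) ^ (k + 1) * f (k + 1)
      = (m.choose (k + 1) : ℚ) * (-1) ^ (k + 1) * f (k + 1)
        - (m.choose k : ℚ) * (-1) ^ k * f (k + 1) := by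
    intro k
    rw [Nat.choose_succ_succ]; push_cast; ring
  simp only [h3, Finset.sum_sub_distrib]
  simp only [Nat.choose_zero_right]
  ring

lemma aux_choose (m k : ℕ) :
    (m.choose k : ℚ) / (k + 1) = ((m + 1).choose (k + 1) : ℚ) / (m + 1) := by
  have h : ((m : ℚ) + 1) * m.choose k = (m + 1).choose (k + 1) * (k + 1) := by
    exact_mod_cast Nat.add_one_mul_choose_eq m k
  field_simp
  linarith

lemma aux_alt (n : ℕ) :
    ∑ k ∈ Finset.range (n + 1), ((n + 1).choose (k + 1) : ℚ) * (-1) ^ k = 1 := by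
  have h := aux_diff (fun _ => 1) n
  rw [Finset.sum_range_succ'] at h
  simp only [pow_succ, sub_self, mul_zero, Finset.sum_const_zero, mul_one, mul_neg,
    Finset.sum_neg_distrib] at h
  simp at h
  linarith

lemma aux_T (n : ℕ) :
    ∑ k ∈ Finset.range (n + 1), (n.choose k : ℚ) * (-1) ^ k / (k + 1) = 1 / (n + 1) := by
  have h := congrArg (fun x : ℚ => x / (n + 1)) (aux_alt n)
  simp only [Finset.sum_div] at h
  rw [← h]
  refine Finset.sum_congr rfl fun k _ => ?_
  rw [mul_div_right_comm, aux_choose, mul_div_right_comm]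

lemma aux_H (n : ℕ) : H (n + 1) = H n + 1 / (n + 1) := by
  unfold H
  rw [Finset.sum_Icc_succ_top (by omega)]; push_cast; rfl

lemma aux_H2 (n : ℕ) : H2 (n + 1) = H2 n + 1 / (n + 1) ^ 2 := by
  unfold H2
  rw [Finset.sum_Icc_succ_top (by omega)]; push_cast; rfl

lemma aux_S (m : ℕ) :
    ∑ k ∈ Finset.range (m + 1), ((m + 1).choose (k + 1) : ℚ) * (-1) ^ k / (k + 1)
      = H (m + 1) := by
  induction m with
  | zero => simp [H]
  | succ m ih =>
    have h3 : ∀ k, ((m + 1 + 1).choose (k + 1) : ℚ) * (-1) ^ k / (k + 1)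
      = ((m + 1).choose (k + 1) : ℚ) * (-1) ^ k / (k + 1)
        + ((m + 1).choose k : ℚ) * (-1) ^ k / (k + 1) := by
      intro k
      rw [Nat.choose_succ_succ]; push_cast; ring
    simp only [h3, Finset.sum_add_distrib]
    rw [aux_T, aux_H (m + 1), Finset.sum_range_succ, ih]
    simp

theorem stmt11 (n : ℕ) (hn : 0 < n) :
    ∑ k ∈ Finset.Icc 1 n, (n.choose k : ℚ) * (-1) ^ k * H2 k = -(H n) / n := by
  obtain ⟨m, rfl⟩ : ∃ m, n = m + 1 := ⟨n - 1, by omega⟩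
  have h0 : ∑ k ∈ Finset.Icc 1 (m + 1), ((m + 1).choose k : ℚ) * (-1) ^ k * H2 k
      = ∑ k ∈ Finset.range (m + 2), ((m + 1).choose k : ℚ) * (-1) ^ k * H2 k := by
    apply Finset.sum_subset
    · intro k hk
      simp only [Finset.mem_Icc, Finset.mem_range] at *
      omega
    · intro k hk hk'
      simp only [Finset.mem_Icc, Finset.mem_range] at *
      have : k = 0 := by omega
      subst this
      simp [H2]
  rw [h0, aux_diff, ← aux_S, ← Finset.sum_neg_distrib, Finset.sum_div]
  refine Finset.sum_congr rfl fun k _ => ?_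
  rw [aux_H2]
  have h := aux_choose m k
  push_cast
  calc (m.choose k : ℚ) * (-1) ^ k * (H2 k - (H2 k + 1 / (k + 1) ^ 2))
      = -((m.choose k : ℚ) / (k + 1)) * (-1) ^ k / (k + 1) := by field_simp; ring
    _ = _ := by rw [h]; ring
end

section
/- Let p > 3 be a prime. Then ∑_{1 ≤ k ≤ (p-1)/2, k odd} H_k/k ≡ (3/4)·q_p(2)² − (-1)^{(p-1)/2}·E_{p-3}/2 (mod p), where q_p(2) = (2^{p-1} − 1)/p. -/
open Finset in
lemma aux_refl {F : Type*} [AddCommMonoid F] (p : ℕ) (f : ℕ → F) (P P' : ℕ → Prop) [DecidablePred P]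
    [DecidablePred P'] (h : ∀ k, 1 ≤ k → k < p → (P k ↔ P' (p - k))) :
    ∑ k ∈ (Ico 1 p).filter P, f k = ∑ k ∈ (Ico 1 p).filter P', f (p - k) := by
  refine Finset.sum_bij' (fun k _ => p - k) (fun k _ => p - k) ?_ ?_ ?_ ?_ ?_
  · intro k hk
    simp only [mem_filter, mem_Ico] at hk ⊢
    exact ⟨by omega, (h k hk.1.1 hk.1.2).1 hk.2⟩
  · intro k hk
    simp only [mem_filter, mem_Ico] at hk ⊢
    refine ⟨by omega, (h (p - k) (by omega) (by omega)).2 ?_⟩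
    rw [show p - (p - k) = k by omega]
    exact hk.2
  · intro k hk
    simp only [mem_filter, mem_Ico] at hk
    omega
  · intro k hk
    simp only [mem_filter, mem_Ico] at hk
    omega
  · intro k hk
    simp only [mem_filter, mem_Ico] at hk
    rw [show p - (p - k) = k by omega]

lemma aux_ne {p : ℕ} {k : ℕ} (h1 : 1 ≤ k) (h2 : k < p) : (k : ZMod p) ≠ 0 := by
  intro h
  rw [ZMod.natCast_eq_zero_iff] at h
  exact absurd (Nat.le_of_dvd h1 h) (by omega)

lemma aux_sub {p : ℕ} {k : ℕ} (h2 : k < p) : ((p - k : ℕ) : ZMod p) = -(k : ZMod p) := by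
  rw [Nat.cast_sub h2.le]; simp

/-- odd-even pair sum vanishes -/
lemma aux_OE (p : ℕ) [hF : Fact p.Prime] (hp3 : 3 < p) :
    ∑ x ∈ (Finset.Ico 1 p ×ˢ Finset.Ico 1 p).filter (fun x => Odd x.1 ∧ Even x.2 ∧ x.1 < x.2),
      (x.1 : ZMod p)⁻¹ * (x.2 : ZMod p)⁻¹ = 0 := by
  set T := (Finset.Ico 1 p ×ˢ Finset.Ico 1 p).filter (fun x => Odd x.1 ∧ Even x.2 ∧ x.1 < x.2)
    with hT
  have hmem : ∀ x, x ∈ T ↔ (1 ≤ x.1 ∧ x.2 < p ∧ x.1 % 2 = 1 ∧ x.2 % 2 = 0 ∧ x.1 < x.2) := by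
    intro x
    simp only [hT, Finset.mem_filter, Finset.mem_product, Finset.mem_Ico, Nat.odd_iff,
      Nat.even_iff]
    omega
  have hpodd : p % 2 = 1 := Nat.odd_iff.mp (hF.out.odd_of_ne_two (by omega))
  set s := ∑ x ∈ T, (x.1 : ZMod p)⁻¹ * (x.2 : ZMod p)⁻¹ with hs
  have h1 : ∑ x ∈ T, ((x.2 - x.1 : ℕ) : ZMod p)⁻¹ * (x.2 : ZMod p)⁻¹ = s := by
    refine Finset.sum_bij' (fun x _ => (x.2 - x.1, x.2)) (fun x _ => (x.2 - x.1, x.2))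
      ?_ ?_ ?_ ?_ ?_
    · intro x hx; rw [hmem] at hx ⊢; dsimp only; omega
    · intro x hx; rw [hmem] at hx ⊢; dsimp only; omega
    · intro x hx; rw [hmem] at hx; ext <;> dsimp only; omega
    · intro x hx; rw [hmem] at hx; ext <;> dsimp only; omega
    · intro x hx; rfl
  have h2 : ∑ x ∈ T, (x.1 : ZMod p)⁻¹ * ((p - (x.2 - x.1) : ℕ) : ZMod p)⁻¹ = s := by
    refine Finset.sum_bij' (fun x _ => (x.1, p - (x.2 - x.1))) (fun x _ => (x.1, p - (x.2 - x.1)))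
      ?_ ?_ ?_ ?_ ?_
    · intro x hx; rw [hmem] at hx ⊢; dsimp only; omega
    · intro x hx; rw [hmem] at hx ⊢; dsimp only; omega
    · intro x hx; rw [hmem] at hx; ext <;> dsimp only; omega
    · intro x hx; rw [hmem] at hx; ext <;> dsimp only; omega
    · intro x hx; rfl
  have h3 : s = -s - s := by
    conv_rhs => rw [← h1]
    conv_rhs => enter [1]; rw [h1, ← h2]
    rw [hs, ← Finset.sum_neg_distrib, ← Finset.sum_sub_distrib]
    refine Finset.sum_congr rfl ?_
    intro x hx
    rw [hmem] at hx
    have a1 : (x.1 : ZMod p) ≠ 0 := aux_ne (by omega) (by omega)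
    have a2 : (x.2 : ZMod p) ≠ 0 := aux_ne (by omega) (by omega)
    have a3 : ((x.2 - x.1 : ℕ) : ZMod p) ≠ 0 := aux_ne (by omega) (by omega)
    rw [aux_sub (by omega)]
    have a4 : (x.2 : ZMod p) = x.1 + ((x.2 - x.1 : ℕ) : ZMod p) := by
      rw [Nat.cast_sub (by omega)]; ring
    generalize ((x.2 - x.1 : ℕ) : ZMod p) = d at *
    field_simp
    rw [a4]; ring
  have h4 : ((3 : ℕ) : ZMod p) ≠ 0 := aux_ne (by omega) (by omega)
  have h5 : ((3 : ℕ) : ZMod p) * s = 0 := by push_cast; linear_combination h3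
  exact (mul_eq_zero.mp h5).resolve_left h4

lemma aux_choose_s14 (p : ℕ) [hF : Fact p.Prime] (k : ℕ) (hk : k < p) :
    ((p - 1).choose k : ZMod p) = (-1) ^ k := by
  induction k with
  | zero => simp
  | succ k ih =>
    have h := ih (by omega)
    have h2 : p.choose (k + 1) = (p - 1).choose k + (p - 1).choose (k + 1) := by
      conv_lhs => rw [show p = (p - 1) + 1 by omega]
      rw [Nat.choose_succ_succ]
    have h3 : ((p.choose (k + 1) : ℕ) : ZMod p) = 0 := by
      rw [ZMod.natCast_eq_zero_iff]
      exact hF.out.dvd_choose_self (by omega) hk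
    rw [h2] at h3
    push_cast at h3
    rw [h] at h3
    rw [pow_succ]
    linear_combination h3

/-- parity split -/
lemma aux_split {F : Type*} [AddCommMonoid F] (s : Finset ℕ) (f : ℕ → F) :
    ∑ k ∈ s.filter (fun k => Even k), f k + ∑ k ∈ s.filter (fun k => Odd k), f k
      = ∑ k ∈ s, f k := by
  rw [← Finset.sum_filter_add_sum_filter_not s (fun k => Even k)]
  simp only [Nat.not_even_iff_odd]

lemma aux_oddeven (p : ℕ) [hF : Fact p.Prime] (hp3 : 3 < p) (f : ℕ → ZMod p) :
    ∑ k ∈ (Finset.Ico 1 p).filter (fun k => Odd k), f k =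
    ∑ k ∈ (Finset.Ico 1 p).filter (fun k => Even k), f (p - k) := by
  have hpodd : p % 2 = 1 := Nat.odd_iff.mp (hF.out.odd_of_ne_two (by omega))
  apply aux_refl
  intro k h1 h2
  rw [Nat.odd_iff, Nat.even_iff]
  omega

lemma aux_odd_inv (p : ℕ) [hF : Fact p.Prime] (hp3 : 3 < p) :
    ∑ k ∈ (Finset.Ico 1 p).filter (fun k => Odd k), (k : ZMod p)⁻¹ =
    -∑ k ∈ (Finset.Ico 1 p).filter (fun k => Even k), (k : ZMod p)⁻¹ := by
  rw [aux_oddeven p hp3, ← Finset.sum_neg_distrib]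
  refine Finset.sum_congr rfl ?_
  intro k hk
  simp only [Finset.mem_filter, Finset.mem_Ico] at hk
  rw [aux_sub hk.1.2, inv_neg]

lemma aux_odd_inv2 (p : ℕ) [hF : Fact p.Prime] (hp3 : 3 < p) :
    ∑ k ∈ (Finset.Ico 1 p).filter (fun k => Odd k), (k : ZMod p)⁻¹ ^ 2 =
    ∑ k ∈ (Finset.Ico 1 p).filter (fun k => Even k), (k : ZMod p)⁻¹ ^ 2 := by
  rw [aux_oddeven p hp3]
  refine Finset.sum_congr rfl ?_
  intro k hk
  simp only [Finset.mem_filter, Finset.mem_Ico] at hk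
  rw [aux_sub hk.1.2, inv_neg, neg_sq]

lemma aux_sum_zmod (p : ℕ) [hF : Fact p.Prime] (f : ZMod p → ZMod p) (h0 : f 0 = 0) :
    ∑ k ∈ Finset.Ico 1 p, f k = ∑ x : ZMod p, f x := by
  have hp := hF.out.pos
  have : ∑ x : ZMod p, f x = ∑ k ∈ Finset.range p, f k := by
    refine Finset.sum_bij' (fun x _ => x.val) (fun k _ => (k : ZMod p)) ?_ ?_ ?_ ?_ ?_
    · intro x _; exact Finset.mem_range.mpr (ZMod.val_lt x)
    · intro x _; exact Finset.mem_univ _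
    · intro x _; simp
    · intro x hx; exact ZMod.val_cast_of_lt (Finset.mem_range.mp hx)
    · intro x _; simp
  rw [this, Finset.range_eq_Ico, Finset.sum_eq_sum_Ico_succ_bot hp]
  simp [h0]

lemma aux_two (p : ℕ) (hp3 : 3 < p) : (2 : ZMod p) ≠ 0 := by
  have : ((2 : ℕ) : ZMod p) ≠ 0 := aux_ne (by omega) (by omega)
  exact_mod_cast this

lemma aux_three (p : ℕ) (hp3 : 3 < p) : (3 : ZMod p) ≠ 0 := by
  have : ((3 : ℕ) : ZMod p) ≠ 0 := aux_ne (by omega) (by omega)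
  exact_mod_cast this

lemma aux_inv2 (p : ℕ) [hF : Fact p.Prime] (hp3 : 3 < p) :
    ∑ k ∈ Finset.Ico 1 p, (k : ZMod p)⁻¹ ^ 2 = 0 := by
  rw [aux_sum_zmod p (fun x => x⁻¹ ^ 2) (by simp)]
  have h2 := aux_two p hp3
  have h := Equiv.sum_comp (Equiv.mulLeft₀ (2 : ZMod p) h2) (fun x => x⁻¹ ^ 2)
  simp only [Equiv.mulLeft₀_apply, mul_inv, mul_pow, ← Finset.mul_sum] at h
  have h3 := aux_three p hp3
  set s := ∑ x : ZMod p, x⁻¹ ^ 2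
  have : 3 * s = 0 := by
    field_simp at h
    linear_combination -h
  exact (mul_eq_zero.mp this).resolve_left h3

lemma aux_even_inv2 (p : ℕ) [hF : Fact p.Prime] (hp3 : 3 < p) :
    ∑ k ∈ (Finset.Ico 1 p).filter (fun k => Even k), (k : ZMod p)⁻¹ ^ 2 = 0 := by
  have h := aux_split (Finset.Ico 1 p) (fun k => (k : ZMod p)⁻¹ ^ 2)
  rw [aux_inv2 p hp3, aux_odd_inv2 p hp3] at h
  have h2 := aux_two p hp3
  rw [← two_mul] at h
  exact (mul_eq_zero.mp h).resolve_left h2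

lemma aux_double {F : Type*} [AddCommMonoid F] (p n : ℕ) (hn : p = 2 * n + 1) (f : ℕ → F) :
    ∑ k ∈ (Finset.Ico 1 p).filter (fun k => Even k), f k = ∑ k ∈ Finset.Icc 1 n, f (2 * k) := by
  refine Finset.sum_bij' (fun k _ => k / 2) (fun k _ => 2 * k) ?_ ?_ ?_ ?_ ?_
  all_goals
    intro k hk
    simp only [Finset.mem_filter, Finset.mem_Ico, Finset.mem_Icc, Nat.even_iff] at hk ⊢
  any_goals omega
  rw [show 2 * (k / 2) = k by omega]

lemma aux_even_q (p : ℕ) [hF : Fact p.Prime] (hp3 : 3 < p) (Q : ℤ)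
    (hQ : (2 : ℤ) ^ (p - 1) - 1 = p * Q) :
    ∑ k ∈ (Finset.Ico 1 p).filter (fun k => Even k), (k : ZMod p)⁻¹ = -(Q : ZMod p) := by
  have hp := hF.out
  have hsum : ∑ k ∈ Finset.Ico 1 p, ((p.choose k / p : ℕ) : ℤ) = 2 * Q := by
    have h1 := Nat.sum_range_choose p
    rw [Finset.sum_range_succ, Finset.range_eq_Ico, Finset.sum_eq_sum_Ico_succ_bot hp.pos] at h1
    have h2 : ∑ k ∈ Finset.Ico (0 + 1) p, p.choose k
        = p * ∑ k ∈ Finset.Ico 1 p, p.choose k / p := by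
      rw [Finset.mul_sum]
      refine Finset.sum_congr rfl ?_
      intro k hk
      simp only [Finset.mem_Ico] at hk
      rw [Nat.mul_div_cancel' (hp.dvd_choose_self (by omega) hk.2)]
    rw [h2] at h1
    simp only [Nat.choose_zero_right, Nat.choose_self] at h1
    have h3 : (2 : ℤ) ^ p = 2 * 2 ^ (p - 1) := by
      rw [← pow_succ', Nat.sub_add_cancel hp.pos]
    have hp0 : (p : ℤ) ≠ 0 := by exact_mod_cast hp.ne_zero
    apply mul_left_cancel₀ hp0
    zify at h1
    rw [h3] at h1
    push_cast
    linear_combination h1 + 2 * hQ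
  have hsum2 : ∑ k ∈ Finset.Ico 1 p, ((p.choose k / p : ℕ) : ZMod p) = 2 * (Q : ZMod p) := by
    have := congrArg (Int.cast : ℤ → ZMod p) hsum
    rw [Int.cast_sum] at this
    simp only [Int.cast_natCast, Int.cast_mul, Int.cast_ofNat] at this
    exact this
  have hterm : ∀ k ∈ Finset.Ico 1 p, ((p.choose k / p : ℕ) : ZMod p)
      = (-1) ^ (k - 1) * (k : ZMod p)⁻¹ := by
    intro k hk
    simp only [Finset.mem_Ico] at hk
    have hk0 : (k : ZMod p) ≠ 0 := aux_ne hk.1 hk.2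
    rw [← aux_choose_s14 p (k - 1) (by omega), eq_mul_inv_iff_mul_eq₀ hk0]
    norm_cast
    congr 1
    apply Nat.eq_of_mul_eq_mul_left hp.pos
    rw [← mul_assoc, Nat.mul_div_cancel' (hp.dvd_choose_self (by omega) hk.2)]
    have := Nat.add_one_mul_choose_eq (p - 1) (k - 1)
    rw [Nat.sub_add_cancel hp.pos, Nat.sub_add_cancel hk.1] at this
    exact this.symm
  rw [Finset.sum_congr rfl hterm, ← aux_split] at hsum2
  have he : ∑ k ∈ (Finset.Ico 1 p).filter (fun k => Even k), (-1) ^ (k - 1) * (k : ZMod p)⁻¹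
      = -∑ k ∈ (Finset.Ico 1 p).filter (fun k => Even k), (k : ZMod p)⁻¹ := by
    rw [← Finset.sum_neg_distrib]
    refine Finset.sum_congr rfl ?_
    intro k hk
    simp only [Finset.mem_filter, Finset.mem_Ico] at hk
    have : Odd (k - 1) := by
      rw [Nat.odd_iff]; have := Nat.even_iff.mp hk.2; omega
    rw [this.neg_one_pow]; ring
  have ho : ∑ k ∈ (Finset.Ico 1 p).filter (fun k => Odd k), (-1) ^ (k - 1) * (k : ZMod p)⁻¹
      = ∑ k ∈ (Finset.Ico 1 p).filter (fun k => Odd k), (k : ZMod p)⁻¹ := by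
    refine Finset.sum_congr rfl ?_
    intro k hk
    simp only [Finset.mem_filter, Finset.mem_Ico] at hk
    have : Even (k - 1) := by
      rw [Nat.even_iff]; have := Nat.odd_iff.mp hk.2; omega
    rw [this.neg_one_pow]; ring
  rw [he, ho, aux_odd_inv p hp3] at hsum2
  have h2 := aux_two p hp3
  apply mul_left_cancel₀ h2
  linear_combination -hsum2

/-- square of sum as triangular sums -/
lemma aux_tri {F : Type*} [CommRing F] (s : Finset ℕ) (f : ℕ → F) :
    2 * ∑ k ∈ s, (∑ i ∈ s.filter (fun i => i ≤ k), f i) * f k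
      = (∑ k ∈ s, f k) ^ 2 + ∑ k ∈ s, f k ^ 2 := by
  have e1 : ∑ k ∈ s, (∑ i ∈ s.filter (fun i => i ≤ k), f i) * f k
      = ∑ k ∈ s, ∑ i ∈ s, if i ≤ k then f i * f k else 0 := by
    refine Finset.sum_congr rfl fun k _ => ?_
    rw [Finset.sum_mul, Finset.sum_filter]
  have e2 : ∑ k ∈ s, (∑ i ∈ s.filter (fun i => i ≤ k), f i) * f k
      = ∑ k ∈ s, ∑ i ∈ s, if k ≤ i then f i * f k else 0 := by
    rw [e1, Finset.sum_comm]
    refine Finset.sum_congr rfl fun k _ => Finset.sum_congr rfl fun i _ => ?_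
    rw [mul_comm]
  have e3 : ∑ k ∈ s, f k ^ 2 = ∑ k ∈ s, ∑ i ∈ s, if i = k then f i * f k else 0 := by
    refine Finset.sum_congr rfl fun k hk => ?_
    rw [Finset.sum_ite_eq' s k, if_pos hk, sq]
  rw [two_mul]
  conv_lhs => enter [1]; rw [e1]
  rw [e2, e3, sq, Finset.sum_mul_sum, ← Finset.sum_add_distrib, ← Finset.sum_add_distrib]
  refine Finset.sum_congr rfl fun k _ => ?_
  rw [← Finset.sum_add_distrib, ← Finset.sum_add_distrib]
  refine Finset.sum_congr rfl fun i _ => ?_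
  rcases lt_trichotomy i k with h | h | h
  · simp [h.le, h.not_ge, h.ne, mul_comm]
  · subst h; simp
  · simp [h.le, h.not_ge, h.ne', mul_comm]

lemma eul_rec (n : ℕ) (hn : 1 ≤ n) :
    ∑ k ∈ Finset.range (n + 1), (if Even (n - k) then (n.choose k : ℚ) * eulerNumber k else 0)
      = 0 := by
  obtain ⟨m, rfl⟩ : ∃ m, n = m + 1 := ⟨n - 1, by omega⟩
  rw [Finset.sum_range_succ]
  have h : eulerNumber (m + 1) = -∑ j ∈ (Finset.range (m + 1)).attach,
        if Even (m + 1 - j.1) then ((m + 1).choose (m + 1 - j.1) : ℚ) * eulerNumber j.1 else 0 := by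
    rw [eulerNumber]
  rw [Finset.sum_attach (Finset.range (m + 1)) (fun j =>
    if Even (m + 1 - j) then ((m + 1).choose (m + 1 - j) : ℚ) * eulerNumber j else 0)] at h
  have h2 : ∑ j ∈ Finset.range (m + 1),
      (if Even (m + 1 - j) then ((m + 1).choose (m + 1 - j) : ℚ) * eulerNumber j else 0)
      = ∑ j ∈ Finset.range (m + 1),
      (if Even (m + 1 - j) then ((m + 1).choose j : ℚ) * eulerNumber j else 0) := by
    refine Finset.sum_congr rfl fun j hj => ?_
    rw [Nat.choose_symm (Finset.mem_range.mp hj).le]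
  rw [← h2]
  simp only [Nat.sub_self, Even.zero, if_true, Nat.choose_self, Nat.cast_one, one_mul]
  rw [h]; ring

lemma eul_int (n : ℕ) : ∃ z : ℤ, eulerNumber n = z := by
  induction n using Nat.strong_induction_on with
  | _ n ih =>
    rcases Nat.eq_zero_or_pos n with rfl | hn
    · exact ⟨1, by rw [eulerNumber]; simp⟩
    · have h := eul_rec n hn
      rw [Finset.sum_range_succ] at h
      choose! z hz using ih
      refine ⟨-∑ k ∈ Finset.range n, (if Even (n - k) then (n.choose k : ℤ) * z k else 0), ?_⟩
      simp only [Nat.sub_self, Even.zero, if_true, Nat.choose_self, Nat.cast_one, one_mul] at h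
      rw [eq_neg_of_add_eq_zero_right h]
      push_cast
      congr 1
      refine Finset.sum_congr rfl fun k hk => ?_
      rw [hz k (Finset.mem_range.mp hk)]

lemma eul_odd (n : ℕ) (hn : Odd n) : eulerNumber n = 0 := by
  induction n using Nat.strong_induction_on with
  | _ n ih =>
    have h := eul_rec n hn.pos
    rw [Finset.sum_range_succ, Finset.sum_eq_zero] at h
    · simpa using h
    · intro k hk
      split_ifs with he
      · rw [ih k (Finset.mem_range.mp hk), mul_zero]
        have hk := Finset.mem_range.mp hk
        rw [Nat.odd_iff] at *
        rw [Nat.even_iff] at he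
        omega
      · rfl

open Polynomial in
/-- The umbral functional. -/
noncomputable def umb (F : Type*) [CommRing F] (z : ℕ → ℤ) : F[X] →ₗ[F] F :=
  Polynomial.lsum (fun n => (z n : F) • LinearMap.id)

open Polynomial in
lemma umb_mon {F : Type*} [CommRing F] (z : ℕ → ℤ) (n : ℕ) (a : F) :
    umb F z (C a * X ^ n) = a * z n := by
  rw [C_mul_X_pow_eq_monomial, umb, Polynomial.lsum_apply, Polynomial.sum_monomial_index]
  · simp [mul_comm]
  · simp

open Polynomial in
lemma umb_pow {F : Type*} [CommRing F] (z : ℕ → ℤ) (hz : ∀ n, eulerNumber n = z n) (n : ℕ) :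
    umb F z ((X + 1) ^ n + (X - 1) ^ n) = 2 * 0 ^ n := by
  have h1 : ((X + 1) ^ n + (X - 1) ^ n : F[X])
      = ∑ k ∈ Finset.range (n + 1),
        C ((1 + (-1) ^ (n - k)) * (n.choose k : F)) * X ^ k := by
    rw [sub_eq_add_neg, add_pow, add_pow, ← Finset.sum_add_distrib]
    refine Finset.sum_congr rfl fun k _ => ?_
    simp only [map_mul, map_add, map_one, map_pow, map_neg, map_natCast]
    ring
  rw [h1, map_sum]
  simp only [umb_mon]
  rcases Nat.eq_zero_or_pos n with rfl | hn
  · have : eulerNumber 0 = 1 := by rw [eulerNumber]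
    rw [hz 0] at this
    have : z 0 = 1 := by exact_mod_cast this
    simp [this]; norm_num
  · have h := eul_rec n hn
    simp only [hz] at h
    have h' : ∑ k ∈ Finset.range (n + 1), (if Even (n - k) then (n.choose k : ℤ) * z k else 0)
      = 0 := by exact_mod_cast h
    have h'' := congrArg (Int.cast : ℤ → F) h'
    push_cast at h''
    rw [zero_pow (by omega), mul_zero]
    rw [← mul_zero (2 : F), ← h'', Finset.mul_sum]
    refine Finset.sum_congr rfl fun k _ => ?_
    split_ifs with he
    · rw [he.neg_one_pow]; ring
    · rw [(Nat.not_even_iff_odd.mp he).neg_one_pow]; ring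

open Polynomial in
lemma umb_comp {F : Type*} [CommRing F] (z : ℕ → ℤ) (hz : ∀ n, eulerNumber n = z n) (f : F[X]) :
    umb F z (f.comp (X + 1) + f.comp (X - 1)) = 2 * f.eval 0 := by
  induction f using Polynomial.induction_on' with
  | add f g hf hg =>
    simp only [add_comp, eval_add, map_add] at *
    linear_combination hf + hg
  | monomial n a =>
    rw [monomial_comp, monomial_comp, ← mul_add, ← smul_eq_C_mul, map_smul, umb_pow z hz]
    simp [eval_monomial, mul_left_comm]

open Polynomial in
lemma umb_step {F : Type*} [CommRing F] (z : ℕ → ℤ) (hz : ∀ n, eulerNumber n = z n) (r : ℕ)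
    (x : F) :
    umb F z ((X + C (x + 1)) ^ r) + umb F z ((X + C (x - 1)) ^ r) = 2 * x ^ r := by
  have h := umb_comp z hz ((X + C x : F[X]) ^ r)
  simp only [pow_comp, add_comp, X_comp, C_comp, map_add, eval_pow, eval_add, eval_X, eval_C,
    zero_add] at h
  rw [← h, map_add, map_sub, map_one]
  congr 3 <;> ring

open Polynomial in
lemma umb_tele {F : Type*} [CommRing F] (z : ℕ → ℤ) (hz : ∀ n, eulerNumber n = z n) (r m : ℕ) :
    2 * ∑ k ∈ Finset.range m, (-1) ^ k * (2 * k + 1 : F) ^ r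
      = z r - (-1) ^ m * umb F z ((X + C (2 * m : F)) ^ r) := by
  induction m with
  | zero =>
    have := umb_mon z r (1 : F)
    simp at this
    simp [this]
  | succ m ih =>
    rw [Finset.sum_range_succ, mul_add, ih]
    have h := umb_step z hz r (2 * m + 1 : F)
    rw [show (2 * m + 1 + 1 : F) = 2 * ((m + 1 : ℕ) : F) by push_cast; ring,
      show (2 * m + 1 - 1 : F) = 2 * m by ring] at h
    rw [pow_succ]
    linear_combination -(-1) ^ m * h

open Polynomial in
lemma umb_neg {F : Type*} [CommRing F] (z : ℕ → ℤ) (hz : ∀ n, eulerNumber n = z n) (f : F[X]) :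
    umb F z (f.comp (-X)) = umb F z f := by
  induction f using Polynomial.induction_on' with
  | add f g hf hg =>
    simp only [add_comp, map_add] at *
    rw [hf, hg]
  | monomial n a =>
    rw [monomial_comp, neg_pow, show (-1 : F[X]) ^ n = C ((-1) ^ n) by simp, ← mul_assoc,
      ← C_mul, umb_mon, ← C_mul_X_pow_eq_monomial, umb_mon]
    rcases Nat.even_or_odd n with h | h
    · simp [h.neg_one_pow]
    · have := eul_odd n h
      rw [hz] at this
      have : z n = 0 := by exact_mod_cast this
      simp [this]

open Polynomial in
lemma eul_sum (p : ℕ) [hF : Fact p.Prime] (hp3 : 3 < p) (z : ℕ → ℤ)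
    (hz : ∀ n, eulerNumber n = z n) :
    2 * ∑ k ∈ Finset.range ((p - 1) / 2), (-1) ^ k * (2 * k + 1 : ZMod p) ^ (p - 3)
      = z (p - 3) := by
  have hpodd : p % 2 = 1 := Nat.odd_iff.mp (hF.out.odd_of_ne_two (by omega))
  rw [umb_tele z hz]
  have h1 : (2 * (((p - 1) / 2 : ℕ) : ZMod p)) = -1 := by
    have : 2 * ((p - 1) / 2) + 1 = p := by omega
    have := congrArg (Nat.cast : ℕ → ZMod p) this
    push_cast at this
    rw [ZMod.natCast_self] at this
    linear_combination this
  have hev : Even (p - 3) := by rw [Nat.even_iff]; omega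
  have h2 := umb_step z hz (p - 3) (0 : ZMod p)
  have h3 := umb_neg z hz ((X + C (0 - 1 : ZMod p)) ^ (p - 3))
  have h4 : ((X + C (0 - 1 : ZMod p)) ^ (p - 3)).comp (-X) = (X + C (0 + 1 : ZMod p)) ^ (p - 3) := by
    rw [pow_comp, ← hev.neg_pow]
    simp [add_comm]
  rw [h4] at h3
  rw [h3, zero_pow (by omega), mul_zero, ← two_mul] at h2
  have h5 := (mul_eq_zero.mp h2).resolve_left (aux_two p hp3)
  rw [h1, show (-1 : ZMod p) = 0 - 1 by ring, h5]
  ring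

lemma aux_invpow (p : ℕ) [hF : Fact p.Prime] (hp3 : 3 < p) (x : ZMod p) :
    x ^ (p - 3) = x⁻¹ ^ 2 := by
  by_cases hx : x = 0
  · subst hx; rw [zero_pow (by omega)]; simp
  · have h := ZMod.pow_card_sub_one_eq_one hx
    rw [show p - 1 = (p - 3) + 2 by omega, pow_add] at h
    rw [inv_pow]
    exact eq_inv_of_mul_eq_one_left h

/-- `E_{p-3} = 4 ∑_{j ≡ 1 (4)} 1/j² = -4 ∑_{j ≡ 3 (4)} 1/j²`. -/
lemma eul_mod4 (p : ℕ) [hF : Fact p.Prime] (hp3 : 3 < p) (z : ℕ → ℤ)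
    (hz : ∀ n, eulerNumber n = z n) :
    (z (p - 3) : ZMod p) = 4 * ∑ k ∈ (Finset.Ico 1 p).filter (fun k => k % 4 = 1), (k : ZMod p)⁻¹ ^ 2
    ∧ (z (p - 3) : ZMod p)
      = -4 * ∑ k ∈ (Finset.Ico 1 p).filter (fun k => k % 4 = 3), (k : ZMod p)⁻¹ ^ 2 := by
  have hpodd : p % 2 = 1 := Nat.odd_iff.mp (hF.out.odd_of_ne_two (by omega))
  have key : ∀ f : ℕ → ZMod p, ∑ k ∈ (Finset.Ico 1 p).filter (fun k => Odd k), f k =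
      ∑ k ∈ (Finset.Ico 1 p).filter (fun k => k % 4 = 1), f k
      + ∑ k ∈ (Finset.Ico 1 p).filter (fun k => k % 4 = 3), f k := by
    intro f
    rw [← Finset.sum_union]
    · refine Finset.sum_congr ?_ fun _ _ => rfl
      ext k
      simp only [Finset.mem_union, Finset.mem_filter, Finset.mem_Ico, Nat.odd_iff]
      omega
    · rw [Finset.disjoint_left]
      intro k
      simp only [Finset.mem_filter]
      omega
  have h0 := key (fun k => (k : ZMod p)⁻¹ ^ 2)
  rw [aux_odd_inv2 p hp3, aux_even_inv2 p hp3] at h0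
  have h1 := eul_sum p hp3 z hz
  have h2 : ∑ k ∈ Finset.range ((p - 1) / 2), (-1) ^ k * (2 * k + 1 : ZMod p) ^ (p - 3)
      = ∑ k ∈ (Finset.Ico 1 p).filter (fun k => Odd k),
        (-1) ^ (k / 2) * (k : ZMod p)⁻¹ ^ 2 := by
    refine Finset.sum_bij' (fun k _ => 2 * k + 1) (fun k _ => k / 2) ?_ ?_ ?_ ?_ ?_
    all_goals
      intro k hk
      simp only [Finset.mem_filter, Finset.mem_Ico, Finset.mem_range, Nat.odd_iff] at hk ⊢
    any_goals omega
    rw [aux_invpow p hp3, show (2 * k + 1) / 2 = k by omega]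
    push_cast
    rfl
  rw [h2, key] at h1
  have e1 : ∑ k ∈ (Finset.Ico 1 p).filter (fun k => k % 4 = 1), (-1) ^ (k / 2) * (k : ZMod p)⁻¹ ^ 2
      = ∑ k ∈ (Finset.Ico 1 p).filter (fun k => k % 4 = 1), (k : ZMod p)⁻¹ ^ 2 := by
    refine Finset.sum_congr rfl fun k hk => ?_
    simp only [Finset.mem_filter] at hk
    rw [Even.neg_one_pow (by rw [Nat.even_iff]; omega), one_mul]
  have e3 : ∑ k ∈ (Finset.Ico 1 p).filter (fun k => k % 4 = 3), (-1) ^ (k / 2) * (k : ZMod p)⁻¹ ^ 2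
      = -∑ k ∈ (Finset.Ico 1 p).filter (fun k => k % 4 = 3), (k : ZMod p)⁻¹ ^ 2 := by
    rw [← Finset.sum_neg_distrib]
    refine Finset.sum_congr rfl fun k hk => ?_
    simp only [Finset.mem_filter] at hk
    rw [Odd.neg_one_pow (by rw [Nat.odd_iff]; omega)]; ring
  rw [e1, e3] at h1
  constructor
  · linear_combination -h1 + 2 * h0
  · linear_combination -h1 - 2 * h0

/-- harmonic numbers mod p -/
def hz (p k : ℕ) : ZMod p := ∑ i ∈ Finset.Icc 1 k, (i : ZMod p)⁻¹

lemma hz_succ (p k : ℕ) : hz p (k + 1) = hz p k + ((k + 1 : ℕ) : ZMod p)⁻¹ := by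
  unfold hz
  rw [Finset.sum_Icc_succ_top (by omega)]

lemma aux_Ico (p : ℕ) (hp : 1 ≤ p) : Finset.Ico 1 p = Finset.Icc 1 (p - 1) := by
  ext k; simp only [Finset.mem_Ico, Finset.mem_Icc]; omega

lemma hz_refl (p : ℕ) [hF : Fact p.Prime] (hp3 : 3 < p) (k : ℕ) (hk : 1 ≤ k) (hkp : k < p) :
    hz p (p - k) = hz p k - (k : ZMod p)⁻¹ := by
  induction k, hk using Nat.le_induction with
  | base =>
    have h := aux_split (Finset.Ico 1 p) (fun k => (k : ZMod p)⁻¹)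
    rw [aux_odd_inv p hp3, aux_Ico p (by omega)] at h
    unfold hz
    rw [← h]
    simp
  | succ k hk ih =>
    have h1 := ih (by omega)
    have h2 := hz_succ p (p - (k + 1))
    rw [show p - (k + 1) + 1 = p - k by omega, aux_sub (by omega), inv_neg, h1] at h2
    rw [hz_succ]
    linear_combination -h2

lemma hz_full (p n : ℕ) [hF : Fact p.Prime] (hp3 : 3 < p) (hn : p = 2 * n + 1) (Q : ℤ)
    (hQ : (2 : ℤ) ^ (p - 1) - 1 = p * Q) :
    ∑ k ∈ Finset.Icc 1 n, hz p k * (k : ZMod p)⁻¹ = 2 * (Q : ZMod p) ^ 2 := by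
  have h2 := aux_two p hp3
  have h := aux_tri (Finset.Icc 1 n) (fun k => (k : ZMod p)⁻¹)
  have e1 : ∑ k ∈ Finset.Icc 1 n,
      (∑ i ∈ (Finset.Icc 1 n).filter (fun i => i ≤ k), (i : ZMod p)⁻¹) * (k : ZMod p)⁻¹
      = ∑ k ∈ Finset.Icc 1 n, hz p k * (k : ZMod p)⁻¹ := by
    refine Finset.sum_congr rfl fun k hk => ?_
    unfold hz
    congr 1
    refine Finset.sum_congr ?_ fun _ _ => rfl
    ext i
    simp only [Finset.mem_filter, Finset.mem_Icc] at hk ⊢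
    omega
  rw [e1] at h
  have a1 := aux_even_q p hp3 Q hQ
  rw [aux_double p n hn] at a1
  have a2 := aux_even_inv2 p hp3
  rw [aux_double p n hn] at a2
  push_cast at a1 a2
  simp only [mul_inv, mul_pow, ← Finset.mul_sum] at a1 a2
  have a1' : ∑ k ∈ Finset.Icc 1 n, (k : ZMod p)⁻¹ = -2 * Q := by
    generalize ∑ k ∈ Finset.Icc 1 n, (k : ZMod p)⁻¹ = t at a1 ⊢
    field_simp at a1
    linear_combination a1
  have a2' : ∑ k ∈ Finset.Icc 1 n, (k : ZMod p)⁻¹ ^ 2 = 0 :=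
    (mul_eq_zero.mp a2).resolve_left (pow_ne_zero _ (inv_ne_zero h2))
  rw [a1', a2'] at h
  apply mul_left_cancel₀ h2
  linear_combination h

lemma hz_even (p : ℕ) [hF : Fact p.Prime] (hp3 : 3 < p) (Q : ℤ)
    (hQ : (2 : ℤ) ^ (p - 1) - 1 = p * Q) :
    2 * ∑ k ∈ (Finset.Ico 1 p).filter (fun k => Even k), hz p k * (k : ZMod p)⁻¹
      = (Q : ZMod p) ^ 2 := by
  have h := aux_tri ((Finset.Ico 1 p).filter (fun k => Even k)) (fun k => (k : ZMod p)⁻¹)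
  rw [aux_even_q p hp3 Q hQ, aux_even_inv2 p hp3] at h
  have hOE := aux_OE p hp3
  rw [Finset.sum_filter, Finset.sum_product_right] at hOE
  have e : ∑ k ∈ (Finset.Ico 1 p).filter (fun k => Even k), hz p k * (k : ZMod p)⁻¹
      = ∑ k ∈ (Finset.Ico 1 p).filter (fun k => Even k),
        (∑ i ∈ ((Finset.Ico 1 p).filter (fun k => Even k)).filter (fun i => i ≤ k),
          (i : ZMod p)⁻¹) * (k : ZMod p)⁻¹
      + ∑ k ∈ Finset.Ico 1 p, ∑ i ∈ Finset.Ico 1 p,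
        if Odd i ∧ Even k ∧ i < k then (i : ZMod p)⁻¹ * (k : ZMod p)⁻¹ else 0 := by
    rw [Finset.sum_filter, Finset.sum_filter, ← Finset.sum_add_distrib]
    refine Finset.sum_congr rfl fun k hk => ?_
    rw [Finset.mem_Ico] at hk
    by_cases hev : Even k
    · simp only [hev, if_true, true_and]
      unfold hz
      rw [← aux_split (Finset.Icc 1 k), add_mul]
      congr 1
      · congr 1
        refine Finset.sum_congr ?_ fun _ _ => rfl
        ext i
        simp only [Finset.mem_filter, Finset.mem_Icc, Finset.mem_Ico]
        constructor
        · rintro ⟨h1, h2⟩; exact ⟨⟨by omega, h2⟩, h1.2⟩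
        · rintro ⟨h1, h2⟩; exact ⟨by omega, h1.2⟩
      · rw [← Finset.sum_filter, Finset.sum_mul]
        refine Finset.sum_congr ?_ fun _ _ => rfl
        ext i
        simp only [Finset.mem_filter, Finset.mem_Icc, Finset.mem_Ico, Nat.odd_iff]
        rw [Nat.even_iff] at hev
        omega
    · simp [hev]
  rw [e, hOE]
  linear_combination h

lemma aux_D (p n : ℕ) [hF : Fact p.Prime] (hp3 : 3 < p) (hn : p = 2 * n + 1) (z : ℕ → ℤ)
    (hzE : ∀ n, eulerNumber n = z n) :
    ∑ k ∈ (Finset.Ico 1 p).filter (fun k => Even k ∧ n < k), (k : ZMod p)⁻¹ ^ 2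
      = -((-1) ^ n * (z (p - 3) : ZMod p)) := by
  have h2 := aux_two p hp3
  have h0 := aux_even_inv2 p hp3
  rw [← Finset.sum_filter_add_sum_filter_not _ (fun k => n < k), Finset.filter_filter,
    Finset.filter_filter] at h0
  have h1 : ∑ k ∈ (Finset.Ico 1 p).filter (fun k => Even k ∧ ¬ n < k), (k : ZMod p)⁻¹ ^ 2
      = 4 * ∑ k ∈ (Finset.Ico 1 p).filter (fun k => k % 4 = 0), (k : ZMod p)⁻¹ ^ 2 := by
    rw [Finset.mul_sum]
    refine Finset.sum_bij' (fun k _ => 2 * k) (fun k _ => k / 2) ?_ ?_ ?_ ?_ ?_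
    all_goals
      intro k hk
      simp only [Finset.mem_filter, Finset.mem_Ico, Nat.even_iff] at hk ⊢
    any_goals omega
    have : (k : ZMod p) ≠ 0 := aux_ne (by omega) (by omega)
    push_cast
    field_simp
    norm_num
  obtain ⟨m1, m3⟩ := eul_mod4 p hp3 z hzE
  have h3 : ∑ k ∈ (Finset.Ico 1 p).filter (fun k => k % 4 = 0), (k : ZMod p)⁻¹ ^ 2
      = ∑ k ∈ (Finset.Ico 1 p).filter (fun k => k % 4 = p % 4), (k : ZMod p)⁻¹ ^ 2 := by
    rw [aux_refl p _ (fun k => k % 4 = 0) (fun k => k % 4 = p % 4) (by intros; omega)]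
    refine Finset.sum_congr rfl fun k hk => ?_
    simp only [Finset.mem_filter, Finset.mem_Ico] at hk
    rw [aux_sub hk.1.2, inv_neg, neg_sq]
  rw [h1, h3] at h0
  rcases Nat.even_or_odd n with h | h
  · rw [h.neg_one_pow]
    have : p % 4 = 1 := by rw [Nat.even_iff] at h; omega
    rw [this] at h0
    linear_combination h0 + m1
  · rw [h.neg_one_pow]
    have : p % 4 = 3 := by rw [Nat.odd_iff] at h; omega
    rw [this] at h0
    linear_combination h0 - m3

lemma main_zmod (p n : ℕ) [hF : Fact p.Prime] (hp3 : 3 < p) (hn : p = 2 * n + 1) (z : ℕ → ℤ)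
    (hzE : ∀ n, eulerNumber n = z n) (Q : ℤ) (hQ : (2 : ℤ) ^ (p - 1) - 1 = p * Q) :
    4 * ∑ k ∈ (Finset.Icc 1 n).filter (fun k => Odd k), hz p k * (k : ZMod p)⁻¹
      = 3 * (Q : ZMod p) ^ 2 - 2 * ((-1) ^ n * (z (p - 3) : ZMod p)) := by
  have hfull := hz_full p n hp3 hn Q hQ
  rw [← aux_split] at hfull
  have hev := hz_even p hp3 Q hQ
  rw [← Finset.sum_filter_add_sum_filter_not _ (fun k => n < k), Finset.filter_filter,
    Finset.filter_filter] at hev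
  have hD := aux_D p n hp3 hn z hzE
  have e1 : (Finset.Ico 1 p).filter (fun k => Even k ∧ ¬ n < k)
      = (Finset.Icc 1 n).filter (fun k => Even k) := by
    ext k
    simp only [Finset.mem_filter, Finset.mem_Ico, Finset.mem_Icc, Nat.even_iff]
    omega
  have e2 : (Finset.Icc 1 n).filter (fun k => Odd k)
      = (Finset.Ico 1 p).filter (fun k => Odd k ∧ k ≤ n) := by
    ext k
    simp only [Finset.mem_filter, Finset.mem_Ico, Finset.mem_Icc, Nat.odd_iff]
    omega
  have e3 : ∑ k ∈ (Finset.Icc 1 n).filter (fun k => Odd k), hz p k * (k : ZMod p)⁻¹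
      = -∑ k ∈ (Finset.Ico 1 p).filter (fun k => Even k ∧ n < k), hz p k * (k : ZMod p)⁻¹
        + ∑ k ∈ (Finset.Ico 1 p).filter (fun k => Even k ∧ n < k), (k : ZMod p)⁻¹ ^ 2 := by
    rw [e2, aux_refl p _ (fun k => Odd k ∧ k ≤ n) (fun k => Even k ∧ n < k)
      (by intro k _ _; rw [Nat.odd_iff, Nat.even_iff]; omega), ← Finset.sum_neg_distrib,
      ← Finset.sum_add_distrib]
    refine Finset.sum_congr rfl fun k hk => ?_
    simp only [Finset.mem_filter, Finset.mem_Ico] at hk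
    rw [hz_refl p hp3 k hk.1.1 hk.1.2, aux_sub hk.1.2, inv_neg]
    ring
  rw [e1] at hev
  linear_combination 2 * hfull - hev + 2 * e3 + 2 * hD

/-- `a` reduces to `x` modulo `p`. -/
def Red (p : ℕ) (a : ℚ) (x : ZMod p) : Prop :=
  ∃ u v : ℤ, (v : ZMod p) ≠ 0 ∧ a * v = u ∧ x * v = u

lemma Red.add {p : ℕ} [Fact p.Prime] {a b : ℚ} {x y : ZMod p} (h1 : Red p a x) (h2 : Red p b y) :
    Red p (a + b) (x + y) := by
  obtain ⟨u, v, h, ha, hx⟩ := h1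
  obtain ⟨u', v', h', ha', hx'⟩ := h2
  refine ⟨u * v' + u' * v, v * v', by push_cast; exact mul_ne_zero h h', ?_, ?_⟩
  · push_cast; linear_combination v' * ha + v * ha'
  · push_cast; linear_combination v' * hx + v * hx'

lemma Red.mul {p : ℕ} [Fact p.Prime] {a b : ℚ} {x y : ZMod p} (h1 : Red p a x) (h2 : Red p b y) :
    Red p (a * b) (x * y) := by
  obtain ⟨u, v, h, ha, hx⟩ := h1
  obtain ⟨u', v', h', ha', hx'⟩ := h2
  refine ⟨u * u', v * v', by push_cast; exact mul_ne_zero h h', ?_, ?_⟩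
  · push_cast; rw [← ha, ← ha']; ring
  · push_cast; rw [← hx, ← hx']; ring

lemma Red.int (p : ℕ) [Fact p.Prime] (k : ℤ) : Red p k k := ⟨k, 1, by simp, by simp, by simp⟩

lemma Red.inv (p : ℕ) [Fact p.Prime] (k : ℕ) (h1 : 1 ≤ k) (h2 : k < p) :
    Red p ((k : ℚ)⁻¹) ((k : ZMod p)⁻¹) := by
  have h := aux_ne h1 h2
  refine ⟨1, k, by exact_mod_cast h, ?_, ?_⟩
  · have : (k : ℚ) ≠ 0 := by exact_mod_cast (by omega : k ≠ 0)
    push_cast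
    exact inv_mul_cancel₀ this
  · push_cast
    exact inv_mul_cancel₀ h

lemma Red.sum {p : ℕ} [Fact p.Prime] (s : Finset ℕ) (f : ℕ → ℚ) (g : ℕ → ZMod p)
    (h : ∀ k ∈ s, Red p (f k) (g k)) : Red p (∑ k ∈ s, f k) (∑ k ∈ s, g k) := by
  induction s using Finset.induction_on with
  | empty => simpa using Red.int p 0
  | insert a s ha ih =>
    rw [Finset.sum_insert ha, Finset.sum_insert ha]
    exact (h a (Finset.mem_insert_self _ _)).add
      (ih fun k hk => h k (Finset.mem_insert_of_mem hk))

lemma Red.zero {p : ℕ} [hF : Fact p.Prime] {a : ℚ} (h : Red p a 0) : (p : ℤ) ∣ a.num := by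
  obtain ⟨u, v, hv, ha, hx⟩ := h
  rw [zero_mul] at hx
  have hu : (p : ℤ) ∣ u := (ZMod.intCast_zmod_eq_zero_iff_dvd u p).mp hx.symm
  have hv' : ¬ (p : ℤ) ∣ v := fun h => hv ((ZMod.intCast_zmod_eq_zero_iff_dvd v p).mpr h)
  have e : a.num * v = u * a.den := by
    have hd : (a.den : ℚ) ≠ 0 := by exact_mod_cast a.den_ne_zero
    have : (a.num : ℚ) = a * a.den := (Rat.mul_den_eq_num a).symm
    have : (a.num : ℚ) * v = u * a.den := by rw [this, ← ha]; ring
    exact_mod_cast this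
  have hd : (p : ℤ) ∣ a.num * v := e ▸ hu.mul_right _
  exact ((Nat.prime_iff_prime_int.mp hF.out).dvd_or_dvd hd).resolve_right hv'

theorem stmt14 (p : ℕ) (hp : p.Prime) (hp3 : 3 < p) :
    ratModEq p
      (∑ k ∈ (Finset.Icc 1 ((p - 1) / 2)).filter (fun k => Odd k), H k / k)
      (3 / 4 * (((2 : ℚ) ^ (p - 1) - 1) / p) ^ 2
        - (-1) ^ ((p - 1) / 2) * eulerNumber (p - 3) / 2) := by
  haveI : Fact p.Prime := ⟨hp⟩
  have hpodd : p % 2 = 1 := Nat.odd_iff.mp (hp.odd_of_ne_two (by omega))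
  have hn : p = 2 * ((p - 1) / 2) + 1 := by omega
  generalize (p - 1) / 2 = n at *
  obtain ⟨Q, hQ⟩ : (p : ℤ) ∣ 2 ^ (p - 1) - 1 := by
    rw [← ZMod.intCast_zmod_eq_zero_iff_dvd]
    push_cast
    rw [ZMod.pow_card_sub_one_eq_one (aux_two p hp3), sub_self]
  choose z hzE using eul_int
  have hq : ((2 : ℚ) ^ (p - 1) - 1) / p = Q := by
    have hp0 : (p : ℚ) ≠ 0 := by exact_mod_cast hp.ne_zero
    rw [div_eq_iff hp0]
    have : (2 : ℚ) ^ (p - 1) - 1 = p * Q := by exact_mod_cast hQ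
    rw [this]; ring
  have hmain := main_zmod p n hp3 hn z hzE Q hQ
  have hS : Red p (∑ k ∈ (Finset.Icc 1 n).filter (fun k => Odd k), H k / k)
      (∑ k ∈ (Finset.Icc 1 n).filter (fun k => Odd k), hz p k * (k : ZMod p)⁻¹) := by
    apply Red.sum
    intro k hk
    simp only [Finset.mem_filter, Finset.mem_Icc] at hk
    rw [div_eq_mul_inv]
    refine Red.mul ?_ (Red.inv p k (by omega) (by omega))
    unfold H hz
    apply Red.sum
    intro i hi
    rw [Finset.mem_Icc] at hi
    rw [one_div]
    exact Red.inv p i (by omega) (by omega)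
  unfold ratModEq
  apply Red.zero
  rw [hq, hzE]
  set S := ∑ k ∈ (Finset.Icc 1 n).filter (fun k => Odd k), H k / (k : ℚ)
  have h4 : Red p (((2 : ℕ) : ℚ)⁻¹ * ((2 : ℕ) : ℚ)⁻¹) (((2 : ℕ) : ZMod p)⁻¹ * ((2 : ℕ) : ZMod p)⁻¹) :=
    (Red.inv p 2 (by omega) (by omega)).mul (Red.inv p 2 (by omega) (by omega))
  have hT := h4.mul (((Red.int p 4).mul hS).add
    (Red.int p (-(3 * Q ^ 2 - 2 * ((-1) ^ n * z (p - 3))))))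
  convert hT using 1
  · push_cast; ring
  · push_cast; rw [hmain]; ring
end

section
/- Let p > 3 be a prime. Then ∑_{1 ≤ k ≤ (p-1)/2, k even} H_k/k ≡ (5/4)·q_p(2)² + (-1)^{(p-1)/2}·E_{p-3}/2 (mod p), where q_p(2) = (2^{p-1} − 1)/p. -/
namespace Aux15

open Finset

section field
variable {p : ℕ} [Fact p.Prime]

/-- harmonic sums mod `p` -/
def h (p : ℕ) (k : ℕ) : ZMod p := ∑ i ∈ range (k + 1), (i : ZMod p)⁻¹

/-- alternating summand -/
def g (p : ℕ) (k : ℕ) : ZMod p := (-1) ^ k * (k : ZMod p)⁻¹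

/-- alternating partial sums -/
def G (p : ℕ) (k : ℕ) : ZMod p := ∑ i ∈ range (k + 1), g p i


lemma cast_compl {k j : ℕ} (hkj : k + j = p) : (j : ZMod p) = -(k : ZMod p) := by
  have : ((k + j : ℕ) : ZMod p) = 0 := by rw [hkj]; simp
  push_cast at this
  linear_combination this

lemma cast_ne {k : ℕ} (h0 : k ≠ 0) (hk : k < p) : (k : ZMod p) ≠ 0 := by
  intro h
  rw [ZMod.natCast_eq_zero_iff] at h
  exact absurd (Nat.le_of_dvd (Nat.pos_of_ne_zero h0) h) (by omega)

lemma pow_compl {n k j : ℕ} (hp : p = 2 * n + 1) (hkj : k + j = p) :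
    (-1 : ZMod p) ^ j = -(-1) ^ k := by
  have h1 : (-1 : ZMod p) ^ (k + j) = -1 := by
    have ho : Odd (k + j) := ⟨n, by omega⟩
    exact ho.neg_one_pow
  have h2 : (-1 : ZMod p) ^ k * (-1) ^ k = 1 := by
    rw [← mul_pow]; simp
  rw [pow_add] at h1
  linear_combination (-1 : ZMod p) ^ k * h1 - (-1 : ZMod p) ^ j * h2

lemma g_compl {n k j : ℕ} (hp : p = 2 * n + 1) (hkj : k + j = p) : g p j = g p k := by
  unfold g
  rw [pow_compl hp hkj, cast_compl hkj, inv_neg]; ring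

lemma two_ne {n : ℕ} (hp : p = 2 * n + 1) : (2 : ZMod p) ≠ 0 := by
  have hpp : p.Prime := Fact.out
  have := hpp.two_le
  have := cast_ne (p := p) (k := 2) (by norm_num) (by omega)
  simpa using this

lemma sum_half {M : Type*} [AddCommMonoid M] (n : ℕ) (f : ℕ → M) :
    ∑ k ∈ range (2 * n + 2), f k = ∑ k ∈ range (n + 1), (f k + f (2 * n + 1 - k)) := by
  rw [show 2 * n + 2 = (n + 1) + (n + 1) by ring, sum_range_add, sum_add_distrib,
    ← sum_range_reflect (fun x => f (n + 1 + x))]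
  congr 1
  apply sum_congr rfl
  intro x hx
  rw [mem_range] at hx
  congr 1; omega

lemma h_last {n : ℕ} (hp : p = 2 * n + 1) : h p p = 0 := by
  unfold h
  have := sum_half n (fun i => (i : ZMod p)⁻¹)
  rw [show p + 1 = 2 * n + 2 by omega, this]
  apply sum_eq_zero
  intro k hk
  rw [mem_range] at hk
  rw [cast_compl (p := p) (k := k) (j := 2 * n + 1 - k) (by omega), inv_neg]; ring

lemma h_succ (k : ℕ) : h p (k + 1) = h p k + ((k + 1 : ℕ) : ZMod p)⁻¹ := by
  unfold h; rw [sum_range_succ]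

lemma G_succ (k : ℕ) : G p (k + 1) = G p k + g p (k + 1) := by
  unfold G; rw [sum_range_succ]

lemma h_compl {n : ℕ} (hp : p = 2 * n + 1) (k : ℕ) :
    ∀ j, k + j = p → h p j = h p k - (k : ZMod p)⁻¹ := by
  induction k with
  | zero =>
    intro j hj
    obtain rfl : j = p := by omega
    rw [h_last hp]; simp [h]
  | succ k ih =>
    intro j hj
    have h1 := ih (j + 1) (by omega)
    have h2 := cast_compl (p := p) (k := k) (j := j + 1) (by omega)
    rw [h_succ, h2, inv_neg] at h1
    rw [h_succ]
    linear_combination h1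

lemma g_zero : g p 0 = 0 := by simp [g]
lemma g_p : g p p = 0 := by simp [g]

lemma G_compl {n : ℕ} (hp : p = 2 * n + 1) (k : ℕ) :
    ∀ j, k + j = p → G p j = G p p - G p k + g p k := by
  induction k with
  | zero =>
    intro j hj
    obtain rfl : j = p := by omega
    simp [G, g_zero]
  | succ k ih =>
    intro j hj
    have h1 := ih (j + 1) (by omega)
    have h2 := g_compl (p := p) hp (k := k) (j := j + 1) (by omega)
    rw [G_succ, h2] at h1
    rw [G_succ]
    linear_combination h1

/-- vanishing of the full second order sum -/
lemma sq_full {n : ℕ} (hp : p = 2 * n + 1) (hp3 : 3 < p) :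
    ∑ k ∈ range p, ((k : ZMod p)⁻¹) ^ 2 = 0 := by
  have h1 : ∑ k ∈ range p, ((k : ZMod p)⁻¹) ^ 2 = ∑ x : ZMod p, (x⁻¹) ^ 2 := by
    symm
    refine sum_bij' (fun x _ => x.val) (fun k _ => (k : ZMod p)) ?_ ?_ ?_ ?_ ?_
    · intro x _; exact mem_range.2 (ZMod.val_lt x)
    · intro x _; exact mem_univ _
    · intro x _; exact ZMod.natCast_zmod_val x
    · intro k hk; exact ZMod.val_cast_of_lt (mem_range.1 hk)
    · intro x _; rw [ZMod.natCast_zmod_val x]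
  rw [h1, ← FiniteField.sum_pow_lt_card_sub_one (ZMod p) (p - 3)
    (by rw [ZMod.card]; omega)]
  apply sum_congr rfl
  intro x _
  by_cases hx : x = 0
  · subst hx; rw [inv_zero, zero_pow (by norm_num), zero_pow (by omega)]
  · have := ZMod.pow_card_sub_one_eq_one hx
    rw [show p - 1 = (p - 3) + 2 by omega, pow_add] at this
    field_simp
    linear_combination -this

lemma sq_half {n : ℕ} (hp : p = 2 * n + 1) (hp3 : 3 < p) :
    ∑ k ∈ range (n + 1), ((k : ZMod p)⁻¹) ^ 2 = 0 := by
  have h1 := sum_half n (fun k => ((k : ZMod p)⁻¹) ^ 2)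
  have h2 : ∑ k ∈ range (2 * n + 2), ((k : ZMod p)⁻¹) ^ 2 = 0 := by
    rw [show 2 * n + 2 = p + 1 by omega, sum_range_succ, sq_full hp hp3]
    simp
  rw [h2] at h1
  have h3 : ∑ k ∈ range (n + 1), (((k : ZMod p)⁻¹) ^ 2 + (((2 * n + 1 - k : ℕ) : ZMod p)⁻¹) ^ 2)
      = 2 * ∑ k ∈ range (n + 1), ((k : ZMod p)⁻¹) ^ 2 := by
    rw [mul_sum]
    apply sum_congr rfl
    intro k hk
    rw [mem_range] at hk
    rw [cast_compl (p := p) (k := k) (j := 2 * n + 1 - k) (by omega), inv_neg]; ring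
  rw [h3] at h1
  exact (mul_eq_zero.1 h1.symm).resolve_left (two_ne hp)

lemma alt_sq {n : ℕ} (hp : p = 2 * n + 1) :
    ∑ k ∈ range p, (-1) ^ k * ((k : ZMod p)⁻¹) ^ 2 = 0 := by
  have h1 := sum_half n (fun k => (-1) ^ k * ((k : ZMod p)⁻¹) ^ 2)
  rw [show 2 * n + 2 = p + 1 by omega, sum_range_succ] at h1
  have h3 : ∑ k ∈ range (n + 1), ((-1) ^ k * ((k : ZMod p)⁻¹) ^ 2 +
      (-1) ^ (2 * n + 1 - k) * (((2 * n + 1 - k : ℕ) : ZMod p)⁻¹) ^ 2) = 0 := by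
    apply sum_eq_zero
    intro k hk
    rw [mem_range] at hk
    rw [cast_compl (p := p) (k := k) (j := 2 * n + 1 - k) (by omega), inv_neg,
      pow_compl (p := p) (k := k) (j := 2 * n + 1 - k) hp (by omega)]; ring
  rw [h3] at h1
  simpa using h1

lemma h_eq_G {n : ℕ} (hp : p = 2 * n + 1) : h p n = G p p := by
  have key : ∀ m : ℕ, ∑ k ∈ range (2 * m + 1), ((-1) ^ k + 1) * (k : ZMod p)⁻¹ = h p m := by
    intro m
    induction m with
    | zero => simp [h]
    | succ m ih =>
      rw [show 2 * (m + 1) + 1 = 2 * m + 1 + 1 + 1 by ring, sum_range_succ, sum_range_succ, ih,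
        h_succ]
      have e1 : (-1 : ZMod p) ^ (2 * m + 1) = -1 := by simp [pow_add, pow_mul]
      have e2 : (-1 : ZMod p) ^ (2 * m + 1 + 1) = 1 := by rw [pow_succ, e1]; ring
      rw [e1, e2, show 2 * m + 1 + 1 = 2 * (m + 1) by ring, Nat.cast_mul, mul_inv]
      have := two_ne hp
      push_cast
      have h2 : (2 : ZMod p) * 2⁻¹ = 1 := mul_inv_cancel₀ this
      linear_combination ((m : ZMod p) + 1)⁻¹ * h2
  have h1 := key n
  rw [← hp] at h1
  simp only [add_mul, one_mul, sum_add_distrib] at h1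
  have h2 := h_last hp
  unfold h at h2
  rw [sum_range_succ] at h2
  unfold G
  rw [sum_range_succ, g_p]
  simp only [ZMod.natCast_self, inv_zero, add_zero] at h2
  rw [h2] at h1
  rw [← h1]
  simp [g]

lemma T1 (n : ℕ) : 2 * ∑ k ∈ range (n + 1), h p k * (k : ZMod p)⁻¹
    = h p n ^ 2 + ∑ k ∈ range (n + 1), ((k : ZMod p)⁻¹) ^ 2 := by
  induction n with
  | zero => simp [h]
  | succ n ih =>
    rw [sum_range_succ, mul_add, ih, sum_range_succ _ (n + 1), h_succ]; ring

lemma T1g (n : ℕ) : 2 * ∑ k ∈ range (n + 1), g p k * G p k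
    = G p n ^ 2 + ∑ k ∈ range (n + 1), ((k : ZMod p)⁻¹) ^ 2 := by
  induction n with
  | zero => simp [G, g]
  | succ n ih =>
    have : ((-1 : ZMod p) ^ (n + 1)) ^ 2 = 1 := by rw [← pow_mul, mul_comm, pow_mul]; simp
    have h2 : g p (n + 1) ^ 2 = (((n + 1 : ℕ) : ZMod p)⁻¹) ^ 2 := by
      unfold g; rw [mul_pow, this, one_mul]
    rw [sum_range_succ, mul_add, ih, sum_range_succ _ (n + 1), G_succ, ← h2]; ring

lemma conv {m : ℕ} (hm : m < p) : ∑ k ∈ range (m + 1), g p k * g p (m - k)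
    = (-1) ^ m * (2 * (h p m * (m : ZMod p)⁻¹) - 2 * ((m : ZMod p)⁻¹) ^ 2) := by
  rcases Nat.eq_zero_or_pos m with rfl | hm0
  · simp [g]
  have hr : ∑ k ∈ range (m + 1), ((m - k : ℕ) : ZMod p)⁻¹ = h p m := by
    have := sum_range_reflect (fun k => (k : ZMod p)⁻¹) (m + 1)
    simpa [h] using this
  have hm' := cast_ne (p := p) (k := m) (by omega) hm
  have key : ∀ k ∈ range (m + 1), g p k * g p (m - k) =
      (-1) ^ m * ((m : ZMod p)⁻¹ * ((k : ZMod p)⁻¹ + ((m - k : ℕ) : ZMod p)⁻¹)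
       - (if k = 0 then ((m : ZMod p)⁻¹) ^ 2 else 0) - (if k = m then ((m : ZMod p)⁻¹) ^ 2 else 0)) := by
    intro k hk
    rw [mem_range] at hk
    have e : (-1 : ZMod p) ^ m = (-1) ^ k * (-1) ^ (m - k) := by
      rw [← pow_add]; congr 1; omega
    rcases Nat.eq_zero_or_pos k with rfl | hk0
    · simp [g, hm0.ne]; ring
    by_cases hkm : k = m
    · subst hkm
      simp [g, hm0.ne']; ring
    · have a1 := cast_ne (p := p) (k := k) (by omega) (by omega)
      have a2 := cast_ne (p := p) (k := m - k) (by omega) (by omega)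
      have a3 : (m : ZMod p) = k + (m - k : ℕ) := by
        rw [← Nat.cast_add]; congr 1; omega
      rw [if_neg hk0.ne', if_neg hkm, e]
      unfold g
      generalize ((m - k : ℕ) : ZMod p) = b at *
      have : (k : ZMod p)⁻¹ * b⁻¹ = (m : ZMod p)⁻¹ * ((k : ZMod p)⁻¹ + b⁻¹) := by
        field_simp
        rw [a3]; ring
      linear_combination (-1) ^ k * (-1) ^ (m - k) * this
  rw [sum_congr rfl key, ← mul_sum, sum_sub_distrib, sum_sub_distrib, ← mul_sum, sum_add_distrib, hr,
    sum_ite_eq', sum_ite_eq', if_pos (by simp), if_pos (by simp)]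
  unfold h
  ring

/-- The alternating full sum is `q²`. -/
lemma F_eq {n : ℕ} (hp : p = 2 * n + 1) (hp3 : 3 < p) :
    4 * ∑ k ∈ range p, (-1) ^ k * (h p k * (k : ZMod p)⁻¹) = G p p ^ 2 := by
  have h1 := sum_range_diag_flip p (fun i j => g p i * g p j)
  rw [sum_congr rfl (fun m hm => conv (mem_range.1 hm))] at h1
  have h2 : ∀ m ∈ range p, ∑ k ∈ range (p - m), g p m * g p k = g p m * G p p - g p m * G p m := by
    intro m hm
    rw [mem_range] at hm
    have a := G_compl hp m (p - m) (by omega)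
    have b := g_compl (p := p) hp (k := m) (j := p - m) (by omega)
    unfold G at a
    rw [sum_range_succ, b] at a
    rw [← mul_sum]
    unfold G
    linear_combination g p m * a
  rw [sum_congr rfl h2, sum_sub_distrib, ← sum_mul] at h1
  have h3 := T1g (p := p) p
  rw [sum_range_succ, g_p, sum_range_succ _ p, sq_full hp hp3] at h3
  have h4 : ∑ k ∈ range p, g p k = G p p := by
    unfold G; rw [sum_range_succ, g_p, add_zero]
  rw [h4] at h1
  have h5 := alt_sq hp
  simp only [mul_sub, sum_sub_distrib, mul_left_comm _ (2 : ZMod p), ← mul_sum] at h1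
  rw [h5] at h1
  simp at h3
  linear_combination 2 * h1 - h3

lemma T2 {n : ℕ} (hp : p = 2 * n + 1) (hp3 : 3 < p) :
    8 * ∑ k ∈ range (n + 1), (-1) ^ k * (h p k * (k : ZMod p)⁻¹) = G p p ^ 2
      + 4 * ∑ k ∈ range (n + 1), (-1) ^ k * ((k : ZMod p)⁻¹) ^ 2 := by
  rw [← F_eq hp hp3]
  have h1 := sum_half n (fun k => (-1) ^ k * (h p k * (k : ZMod p)⁻¹))
  rw [show 2 * n + 2 = p + 1 by omega, sum_range_succ] at h1
  have h3 : ∑ k ∈ range (n + 1), ((-1) ^ k * (h p k * (k : ZMod p)⁻¹) +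
      (-1) ^ (2 * n + 1 - k) * (h p (2 * n + 1 - k) * ((2 * n + 1 - k : ℕ) : ZMod p)⁻¹)) =
      ∑ k ∈ range (n + 1), (2 * ((-1) ^ k * (h p k * (k : ZMod p)⁻¹))
        - (-1) ^ k * ((k : ZMod p)⁻¹) ^ 2) := by
    apply sum_congr rfl
    intro k hk
    rw [mem_range] at hk
    rw [cast_compl (p := p) (k := k) (j := 2 * n + 1 - k) (by omega), inv_neg,
      pow_compl (p := p) (k := k) (j := 2 * n + 1 - k) hp (by omega),
      h_compl (p := p) hp k (2 * n + 1 - k) (by omega)]; ring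
  rw [h3, sum_sub_distrib, ← mul_sum] at h1
  simp only [ZMod.natCast_self, inv_zero, mul_zero, add_zero] at h1
  linear_combination -4 * h1

lemma choose_pred (k : ℕ) (hk : k < p) : ((p - 1).choose k : ZMod p) = (-1) ^ k := by
  have hpp : p.Prime := Fact.out
  induction k with
  | zero => simp
  | succ k ih =>
    have h1 := ih (by omega)
    have h2 : ((p.choose (k + 1) : ℕ) : ZMod p) = 0 :=
      (ZMod.natCast_eq_zero_iff _ _).2 (hpp.dvd_choose_self (by omega) hk)
    have h3 : p.choose (k + 1) = (p - 1).choose k + (p - 1).choose (k + 1) := by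
      conv_lhs => rw [show p = (p - 1) + 1 by omega, Nat.choose_succ_succ]
    rw [h3] at h2
    push_cast at h2
    rw [pow_succ]
    linear_combination h2 - h1

lemma G_fermat (Q : ℤ) (hQ : (2 : ℤ) ^ (p - 1) - 1 = p * Q) : G p p = -2 * (Q : ZMod p) := by
  have hpp : p.Prime := Fact.out
  have hp1 := hpp.two_le
  have hc : ∀ k, ∃ c : ℕ, k < p - 1 → p.choose (k + 1) = p * c := by
    intro k
    by_cases hk : k < p - 1
    · obtain ⟨c, hc⟩ := hpp.dvd_choose_self (k := k + 1) (by omega) (by omega)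
      exact ⟨c, fun _ => hc⟩
    · exact ⟨0, fun h => absurd h hk⟩
  choose c hc using hc
  have h1 := Nat.sum_range_choose p
  rw [sum_range_succ, show range p = range ((p - 1) + 1) by congr 1; omega, sum_range_succ',
    sum_congr rfl (fun k hk => hc k (mem_range.1 hk)), ← mul_sum] at h1
  simp only [Nat.choose_zero_right, Nat.choose_self] at h1
  have h2 : (p : ℤ) * (∑ k ∈ range (p - 1), c k : ℕ) = p * (2 * Q) := by
    have h3 : (2 : ℤ) ^ p = 2 ^ (p - 1) * 2 := by rw [← pow_succ]; congr 1; omega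
    have h4 : ((p * (∑ k ∈ range (p - 1), c k) + 1 + 1 : ℕ) : ℤ) = 2 ^ p := by
      rw [h1]; push_cast; rfl
    rw [h3] at h4
    push_cast at h4 ⊢
    linear_combination h4 + 2 * hQ
  have h3 := mul_left_cancel₀ (by exact_mod_cast hpp.ne_zero) h2
  have h4 : ((∑ k ∈ range (p - 1), c k : ℕ) : ZMod p) = 2 * (Q : ZMod p) := by
    have := congrArg (fun z : ℤ => (z : ZMod p)) h3
    push_cast at this ⊢
    exact this
  have h5 : G p p = ∑ k ∈ range (p - 1), g p (k + 1) := by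
    unfold G
    rw [sum_range_succ, g_p, show range p = range ((p - 1) + 1) by congr 1; omega, sum_range_succ',
      g_zero]
    simp
  have h6 : ∀ k ∈ range (p - 1), g p (k + 1) = -(c k : ZMod p) := by
    intro k hk
    rw [mem_range] at hk
    have a := cast_ne (p := p) (k := k + 1) (by omega) (by omega)
    have b := Nat.add_one_mul_choose_eq (p - 1) k
    rw [show p - 1 + 1 = p by omega, hc k hk, mul_assoc] at b
    have b' := congrArg (fun z : ℕ => (z : ZMod p)) (Nat.eq_of_mul_eq_mul_left hpp.pos b)
    push_cast at b' a
    rw [choose_pred k (by omega)] at b'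
    unfold g
    push_cast
    rw [pow_succ]
    field_simp
    linear_combination -b'
  rw [h5, sum_congr rfl h6, sum_neg_distrib]
  push_cast at h4
  rw [h4]; ring

end field

section euler

lemma euler_rec (n : ℕ) : ∑ j ∈ range (n + 1),
    (if Even (n - j) then ((n.choose j : ℕ) : ℚ) * eulerNumber j else 0) = if n = 0 then 1 else 0 := by
  cases n with
  | zero => simp [eulerNumber]
  | succ n =>
    rw [sum_range_succ]
    have h1 : eulerNumber (n + 1) = -∑ j ∈ range (n + 1),
        (if Even (n + 1 - j) then (((n + 1).choose j : ℕ) : ℚ) * eulerNumber j else 0) := by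
      rw [eulerNumber]
      congr 1
      rw [sum_attach (range (n + 1)) (fun j =>
        if Even (n + 1 - j) then ((n + 1).choose (n + 1 - j) : ℚ) * eulerNumber j else 0)]
      apply sum_congr rfl
      intro j hj
      rw [mem_range] at hj
      rw [Nat.choose_symm (by omega)]
    simp [h1]

lemma euler_int (n : ℕ) : ∃ z : ℤ, eulerNumber n = z := by
  induction n using Nat.strong_induction_on with
  | _ n ih =>
    have h := euler_rec n
    rw [sum_range_succ] at h
    simp only [Nat.sub_self, Even.zero, if_true, Nat.choose_self, Nat.cast_one, one_mul] at h
    have h2 : ∀ j, ∃ z : ℤ, j < n → eulerNumber j = z := by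
      intro j
      by_cases hj : j < n
      · obtain ⟨z, hz⟩ := ih j hj
        exact ⟨z, fun _ => hz⟩
      · exact ⟨0, fun h => absurd h hj⟩
    choose z hz using h2
    refine ⟨(if n = 0 then 1 else 0) - ∑ j ∈ range n,
      (if Even (n - j) then ((n.choose j : ℕ) : ℤ) * z j else 0), ?_⟩
    push_cast
    rw [← h]
    rw [sum_congr rfl (g := fun j => if Even (n - j) then ((n.choose j : ℕ) : ℚ) * (z j : ℚ) else 0)]
    · ring
    · intro j hj
      rw [hz j (mem_range.1 hj)]

/-- integer Euler numbers -/
noncomputable def e (n : ℕ) : ℤ := (euler_int n).choose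

lemma e_spec (n : ℕ) : eulerNumber n = (e n : ℚ) := (euler_int n).choose_spec

lemma e_rec (n : ℕ) : ∑ j ∈ range (n + 1),
    (if Even (n - j) then ((n.choose j : ℕ) : ℤ) * e j else 0) = if n = 0 then 1 else 0 := by
  have h := euler_rec n
  simp only [e_spec] at h
  exact_mod_cast h

lemma e_odd (n : ℕ) (hn : Odd n) : e n = 0 := by
  induction n using Nat.strong_induction_on with
  | _ n ih =>
    have h := e_rec n
    rw [sum_range_succ, sum_eq_zero] at h
    · have h0 : n ≠ 0 := by rintro rfl; simp at hn
      simpa [h0] using h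
    · intro j hj
      rw [mem_range] at hj
      split_ifs with hE
      · rw [ih j hj, mul_zero]
        rw [Nat.even_sub hj.le] at hE
        rw [← Nat.not_even_iff_odd] at hn ⊢
        tauto
      · rfl

variable {R : Type*} [CommRing R]

/-- umbral Euler polynomial -/
noncomputable def P (m : ℕ) (x : R) : R :=
  ∑ k ∈ range (m + 1), ((m.choose k : ℕ) : R) * (e k : R) * x ^ (m - k)

lemma P_add (m : ℕ) (x : R) : P m (x + 1) + P m (x - 1) = 2 * x ^ m := by
  have h1 := sum_range_diag_flip (m + 1) (fun k i =>
    ((m.choose k : ℕ) : R) * (e k : R) * ((((m - k).choose i : ℕ) : R) * x ^ (m - k - i) * (1 + (-1) ^ i)))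
  have h2 : ∀ k ∈ range (m + 1), ∑ i ∈ range (m + 1 - k),
      ((m.choose k : ℕ) : R) * (e k : R) * ((((m - k).choose i : ℕ) : R) * x ^ (m - k - i) * (1 + (-1) ^ i))
      = ((m.choose k : ℕ) : R) * (e k : R) * (x + 1) ^ (m - k)
       + ((m.choose k : ℕ) : R) * (e k : R) * (x - 1) ^ (m - k) := by
    intro k hk
    rw [mem_range] at hk
    rw [← mul_add, ← mul_sum]
    congr 1
    rw [show m + 1 - k = (m - k) + 1 by omega, add_comm x 1, sub_eq_neg_add x 1, add_pow, add_pow,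
      ← sum_add_distrib]
    apply sum_congr rfl
    intro i hi
    rw [one_pow]; ring
  rw [sum_congr rfl h2, sum_add_distrib] at h1
  unfold P
  rw [← h1]
  have h3 : ∀ l ∈ range (m + 1), ∑ k ∈ range (l + 1),
      ((m.choose k : ℕ) : R) * (e k : R) *
        ((((m - k).choose (l - k) : ℕ) : R) * x ^ (m - k - (l - k)) * (1 + (-1) ^ (l - k)))
      = if l = 0 then 2 * x ^ m else 0 := by
    intro l hl
    rw [mem_range] at hl
    have h4 : ∀ k ∈ range (l + 1), ((m.choose k : ℕ) : R) * (e k : R) *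
        ((((m - k).choose (l - k) : ℕ) : R) * x ^ (m - k - (l - k)) * (1 + (-1) ^ (l - k)))
        = ((m.choose l : ℕ) : R) * x ^ (m - l) * 2 *
          (((if Even (l - k) then ((l.choose k : ℕ) : ℤ) * e k else 0 : ℤ)) : R) := by
      intro k hk
      rw [mem_range] at hk
      have a := congrArg (fun z : ℕ => (z : R)) (Nat.choose_mul (n := m) (k := l) (s := k) (by omega))
      push_cast at a
      rw [show m - k - (l - k) = m - l by omega]
      split_ifs with hE
      · rw [hE.neg_one_pow]
        push_cast
        linear_combination (-2 * (e k : R) * x ^ (m - l)) * a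
      · rw [Nat.not_even_iff_odd] at hE
        rw [hE.neg_one_pow]
        simp
    rw [sum_congr rfl h4, ← mul_sum, ← Int.cast_sum, e_rec]
    split_ifs with h0
    · subst h0; simp; ring
    · simp
  rw [sum_congr rfl h3, sum_ite_eq', if_pos (by simp)]

lemma P_zero (m : ℕ) : P m (0 : R) = (e m : R) := by
  unfold P
  rw [sum_range_succ, sum_eq_zero]
  · simp
  · intro k hk
    rw [mem_range] at hk
    rw [zero_pow (by omega), mul_zero]

lemma P_one (m : ℕ) (hm : Even m) (hm0 : m ≠ 0) : P m (1 : R) = 0 := by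
  have h := congrArg (fun z : ℤ => (z : R)) (e_rec m)
  simp only [hm0, if_false, Int.cast_zero, Int.cast_sum] at h
  rw [← h]
  unfold P
  apply sum_congr rfl
  intro k hk
  rw [mem_range] at hk
  split_ifs with hE
  · simp
  · rw [Nat.even_sub (by omega)] at hE
    rw [e_odd k (by rw [← Nat.not_even_iff_odd]; tauto)]
    simp

lemma P_tel (m n : ℕ) (hm : Even m) (hm0 : m ≠ 0) :
    ∑ k ∈ range (n + 1), (-1) ^ k * (2 * (2 * (k : R)) ^ m) = (-1) ^ n * P m ((2 * n + 1 : ℕ) : R) := by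
  induction n with
  | zero => simp [P_one m hm hm0, hm0]
  | succ n ih =>
    rw [sum_range_succ, ih, ← P_add]
    push_cast
    rw [show 2 * ((n : R) + 1) - 1 = 2 * n + 1 by ring]
    ring

end euler

lemma A_eq {p : ℕ} [Fact p.Prime] {n : ℕ} (hp : p = 2 * n + 1) (hp3 : 3 < p) :
    ∑ k ∈ range (n + 1), (-1) ^ k * ((k : ZMod p)⁻¹) ^ 2 = 2 * ((-1) ^ n * (e (p - 3) : ZMod p)) := by
  have h1 := P_tel (R := ZMod p) (p - 3) n (by rw [hp, Nat.even_iff]; omega) (by omega)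
  rw [← hp, ZMod.natCast_self, P_zero] at h1
  rw [← h1, mul_sum]
  apply sum_congr rfl
  intro k hk
  rw [mem_range] at hk
  rcases Nat.eq_zero_or_pos k with rfl | hk0
  · simp; right; omega
  have a1 := cast_ne (p := p) (k := k) (by omega) (by omega)
  have a2 := two_ne hp
  have a3 := ZMod.pow_card_sub_one_eq_one (mul_ne_zero a2 a1)
  rw [show p - 1 = (p - 3) + 2 by omega, pow_add] at a3
  have a4 : (k : ZMod p)⁻¹ * k = 1 := inv_mul_cancel₀ a1
  have a5 : ((k : ZMod p)⁻¹) ^ 2 = 4 * (2 * (k : ZMod p)) ^ (p - 3) := by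
    generalize (2 * (k : ZMod p)) ^ (p - 3) = y at *
    field_simp
    linear_combination -a3
  rw [a5]; ring

section rel

/-- `a` is `p`-integral with reduction `x`. -/
def Rel (p : ℕ) (a : ℚ) (x : ZMod p) : Prop :=
  ∃ u d : ℤ, (d : ZMod p) ≠ 0 ∧ a * d = u ∧ x * d = u

variable {p : ℕ} [Fact p.Prime]

lemma Rel.add {a b : ℚ} {x y : ZMod p} (h1 : Rel p a x) (h2 : Rel p b y) : Rel p (a + b) (x + y) := by
  obtain ⟨u, d, hd, ha, hx⟩ := h1
  obtain ⟨v, f, hf, hb, hy⟩ := h2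
  refine ⟨u * f + v * d, d * f, ?_, ?_, ?_⟩
  · push_cast; exact mul_ne_zero hd hf
  · push_cast; linear_combination (f : ℚ) * ha + (d : ℚ) * hb
  · push_cast; linear_combination (f : ZMod p) * hx + (d : ZMod p) * hy

lemma Rel.mul {a b : ℚ} {x y : ZMod p} (h1 : Rel p a x) (h2 : Rel p b y) : Rel p (a * b) (x * y) := by
  obtain ⟨u, d, hd, ha, hx⟩ := h1
  obtain ⟨v, f, hf, hb, hy⟩ := h2
  refine ⟨u * v, d * f, ?_, ?_, ?_⟩
  · push_cast; exact mul_ne_zero hd hf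
  · push_cast; rw [← ha, ← hb]; ring
  · push_cast; rw [← hx, ← hy]; ring

lemma Rel.int (z : ℤ) : Rel p z z := ⟨z, 1, by simp, by simp, by simp⟩

lemma Rel.inv (k : ℕ) (hk : (k : ZMod p) ≠ 0) : Rel p (1 / k) (k : ZMod p)⁻¹ := by
  refine ⟨1, k, by simpa using hk, ?_, ?_⟩
  · have : (k : ℚ) ≠ 0 := by
      rintro h
      have : k = 0 := by exact_mod_cast h
      subst this; simp at hk
    push_cast; field_simp
  · push_cast; exact inv_mul_cancel₀ hk

lemma Rel.sum {s : Finset ℕ} {a : ℕ → ℚ} {x : ℕ → ZMod p} (h : ∀ k ∈ s, Rel p (a k) (x k)) :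
    Rel p (∑ k ∈ s, a k) (∑ k ∈ s, x k) := by
  classical
  induction s using Finset.induction_on with
  | empty => simpa using Rel.int (p := p) 0
  | insert k s hk ih =>
    rw [sum_insert hk, sum_insert hk]
    exact (h k (by simp)).add (ih fun j hj => h j (by simp [hj]))

lemma Rel.modEq {a b : ℚ} {x : ZMod p} (h1 : Rel p a x) (h2 : Rel p b x) : ratModEq p a b := by
  have h3 := h1.add ((Rel.int (p := p) (-1)).mul h2)
  obtain ⟨u, d, hd, ha, hx⟩ := h3
  have e1 : a + ((-1 : ℤ) : ℚ) * b = a - b := by push_cast; ring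
  have e2 : x + ((-1 : ℤ) : ZMod p) * x = 0 := by push_cast; ring
  rw [e1] at ha
  rw [e2, zero_mul] at hx
  unfold ratModEq
  generalize a - b = c at *
  have h4 : c.num * d = u * c.den := by
    have h5 : (c.num : ℚ) = c * c.den := (Rat.mul_den_eq_num c).symm
    have : (c.num : ℚ) * d = u * c.den := by rw [h5, ← ha]; ring
    exact_mod_cast this
  rw [← ZMod.intCast_zmod_eq_zero_iff_dvd]
  have h6 := congrArg (fun z : ℤ => (z : ZMod p)) h4
  push_cast at h6
  rw [← hx, zero_mul] at h6
  exact (mul_eq_zero.1 h6).resolve_right hd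

end rel

end Aux15

theorem stmt15 (p : ℕ) (hp : p.Prime) (hp3 : 3 < p) :
    ratModEq p
      (∑ k ∈ (Finset.Icc 1 ((p - 1) / 2)).filter (fun k => Even k), H k / k)
      (5 / 4 * (((2 : ℚ) ^ (p - 1) - 1) / p) ^ 2
        + (-1) ^ ((p - 1) / 2) * eulerNumber (p - 3) / 2) := by
  haveI : Fact p.Prime := ⟨hp⟩
  obtain ⟨n, hn⟩ : ∃ n, p = 2 * n + 1 := by
    rcases hp.eq_two_or_odd' with h | h
    · omega
    · exact h
  have hn2 : (p - 1) / 2 = n := by omega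
  rw [hn2]
  have two0 : (2 : ZMod p) ≠ 0 := Aux15.two_ne hn
  obtain ⟨Q, hQ⟩ : (p : ℤ) ∣ (2 : ℤ) ^ (p - 1) - 1 := by
    rw [← ZMod.intCast_zmod_eq_zero_iff_dvd]
    push_cast
    rw [ZMod.pow_card_sub_one_eq_one two0, sub_self]
  have hQq : ((2 : ℚ) ^ (p - 1) - 1) / p = (Q : ℚ) := by
    have h0 : (p : ℚ) ≠ 0 := by exact_mod_cast hp.ne_zero
    rw [div_eq_iff h0, mul_comm]
    exact_mod_cast hQ
  rw [hQq, Aux15.e_spec]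
  have hH : ∀ k, k < p → Aux15.Rel p (H k) (Aux15.h p k) := by
    intro k hk
    have h1 : Aux15.h p k = ∑ i ∈ Finset.Icc 1 k, (i : ZMod p)⁻¹ := by
      unfold Aux15.h
      rw [Finset.sum_range_succ', Finset.range_eq_Ico, Finset.sum_Ico_add' (fun i : ℕ => (i : ZMod p)⁻¹)]
      simp
      rfl
    rw [h1]
    unfold H
    apply Aux15.Rel.sum
    intro i hi
    rw [Finset.mem_Icc] at hi
    exact Aux15.Rel.inv i (Aux15.cast_ne (by omega) (by omega))
  have hL : Aux15.Rel p (∑ k ∈ (Finset.Icc 1 n).filter (fun k => Even k), H k / k)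
      (∑ k ∈ (Finset.Icc 1 n).filter (fun k => Even k), Aux15.h p k * (k : ZMod p)⁻¹) := by
    apply Aux15.Rel.sum
    intro k hk
    rw [Finset.mem_filter, Finset.mem_Icc] at hk
    rw [div_eq_mul_one_div]
    exact (hH k (by omega)).mul (Aux15.Rel.inv k (Aux15.cast_ne (by omega) (by omega)))
  refine hL.modEq ?_
  have hR := (((Aux15.Rel.inv (p := p) 2 (by simpa using two0)).mul
    (Aux15.Rel.inv (p := p) 2 (by simpa using two0))).mul (Aux15.Rel.int (5 * Q ^ 2))).add
    ((Aux15.Rel.inv (p := p) 2 (by simpa using two0)).mul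
      (Aux15.Rel.int ((-1) ^ n * Aux15.e (p - 3))))
  convert hR using 1
  · push_cast; ring
  · have h1 : 2 * ∑ k ∈ (Finset.Icc 1 n).filter (fun k => Even k), Aux15.h p k * (k : ZMod p)⁻¹
        = ∑ k ∈ Finset.range (n + 1), Aux15.h p k * (k : ZMod p)⁻¹
         + ∑ k ∈ Finset.range (n + 1), (-1) ^ k * (Aux15.h p k * (k : ZMod p)⁻¹) := by
      rw [Finset.sum_filter, ← Finset.sum_add_distrib, Finset.sum_range_succ', Finset.range_eq_Ico,
        Finset.sum_Ico_add' (fun k : ℕ => Aux15.h p k * (k : ZMod p)⁻¹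
          + (-1) ^ k * (Aux15.h p k * (k : ZMod p)⁻¹)), Finset.mul_sum]
      simp only [Nat.cast_zero, inv_zero, mul_zero, add_zero, zero_add]
      apply Finset.sum_congr rfl
      intro k _
      split_ifs with hE
      · rw [hE.neg_one_pow]; ring
      · rw [Nat.not_even_iff_odd] at hE
        rw [hE.neg_one_pow]; ring
    have h2 := Aux15.T1 (p := p) n
    rw [Aux15.sq_half hn hp3, Aux15.h_eq_G hn, Aux15.G_fermat Q hQ] at h2
    have h3 := Aux15.T2 hn hp3
    rw [Aux15.A_eq hn hp3, Aux15.G_fermat Q hQ] at h3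
    have i2 : (2 : ZMod p) * 2⁻¹ = 1 := mul_inv_cancel₀ two0
    push_cast
    generalize (2 : ZMod p)⁻¹ = w at *
    generalize (∑ k ∈ (Finset.Icc 1 n).filter (fun k => Even k), Aux15.h p k * (k : ZMod p)⁻¹) = S at *
    have h16 : (16 : ZMod p) ≠ 0 := by
      rw [show (16 : ZMod p) = 2 ^ 4 by norm_num]; exact pow_ne_zero _ two0
    apply mul_left_cancel₀ h16
    linear_combination 8 * h1 + 4 * h2 + h3
      - (20 * (Q : ZMod p) ^ 2 * (w * 2 + 1) + 8 * (-1) ^ n * (Aux15.e (p - 3) : ZMod p)) * i2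
end

section
/- Let p = 2n + 1 be an odd prime. Then for every k with 0 ≤ k ≤ n, C(n,k) · C(n+k,k) · (-1)^k ≡ C(2k,k)²/16^k (mod p²), as a congruence of rational numbers whose denominators are coprime to p. -/
theorem key_int (p n : ℕ) (hp : p.Prime) (hpn : p = 2 * n + 1) (k : ℕ) (hk : k ≤ n) :
    ((p : ℤ) ^ 2) ∣ 16 ^ k * ((n.choose k : ℤ) * ((n + k).choose k : ℤ) * (-1) ^ k)
      - ((2 * k).choose k : ℤ) ^ 2 := by
  induction k with
  | zero => simp
  | succ k ih =>
    have ih := ih (by omega)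
    have h1 : ((n.choose (k+1) : ℤ)) * (k + 1) = n.choose k * (n - k) := by
      have h := Nat.choose_succ_right_eq n k
      zify [show k ≤ n by omega] at h
      exact h
    have h2 : (((n + (k+1)).choose (k+1) : ℤ)) * (k + 1) = (n + k + 1) * (n + k).choose k := by
      have h := Nat.add_one_mul_choose_eq (n + k) k
      zify at h
      exact h.symm
    have h3 : ((k : ℤ) + 1) * ((2 * (k+1)).choose (k+1) : ℤ)
        = 2 * (2 * k + 1) * ((2 * k).choose k : ℤ) := by
      have h := Nat.succ_mul_centralBinom_succ k
      simp only [Nat.centralBinom] at h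
      exact_mod_cast h
    have hcop : IsCoprime ((p : ℤ) ^ 2) (((k : ℤ) + 1) ^ 2) := by
      apply IsCoprime.pow
      have h : Nat.Coprime p (k + 1) :=
        Nat.coprime_of_lt_prime (Nat.succ_ne_zero k) (by omega) hp
      exact_mod_cast Nat.isCoprime_iff_coprime.mpr h
    apply hcop.dvd_of_dvd_mul_left
    have hpz : (p : ℤ) = 2 * n + 1 := by exact_mod_cast hpn
    obtain ⟨c, hc⟩ := ih
    generalize ((2 * (k+1)).choose (k+1) : ℤ) = B' at *
    generalize ((n + (k+1)).choose (k+1) : ℤ) = A' at *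
    generalize (n.choose (k+1) : ℤ) = N' at *
    generalize ((2 * k).choose k : ℤ) = B at *
    generalize ((n + k).choose k : ℤ) = A at *
    generalize (n.choose k : ℤ) = N at *
    refine ⟨4 * (2 * k + 1) ^ 2 * c - 4 * (16 ^ k * (N * A * (-1) ^ k)), ?_⟩
    have e : ((k : ℤ) + 1) ^ 2 * (16 ^ (k+1) * (N' * A' * (-1) ^ (k+1)) - B' ^ 2)
        = -16 * 16 ^ k * (-1) ^ k * ((N' * (k+1)) * (A' * (k+1))) - ((k+1) * B') ^ 2 := by ring
    rw [e, h1, h2, h3]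
    have e2 : (p : ℤ) ^ 2 * (4 * (2 * k + 1) ^ 2 * c - 4 * (16 ^ k * (N * A * (-1) ^ k)))
      = 4 * (2 * k + 1) ^ 2 * ((p : ℤ) ^ 2 * c) - 4 * (p : ℤ) ^ 2 * (16 ^ k * (N * A * (-1) ^ k)) := by
      ring
    rw [e2, ← hc, hpz]
    ring

theorem stmt17 (p n : ℕ) (hp : p.Prime) (hpn : p = 2 * n + 1) (k : ℕ) (hk : k ≤ n) :
    ratModEq (p ^ 2)
      ((n.choose k : ℚ) * ((n + k).choose k : ℚ) * (-1) ^ k)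
      (((2 * k).choose k : ℚ) ^ 2 / 16 ^ k) := by
  unfold ratModEq
  have hkey := key_int p n hp hpn k hk
  set D : ℤ := 16 ^ k * ((n.choose k : ℤ) * ((n + k).choose k : ℤ) * (-1) ^ k)
      - ((2 * k).choose k : ℤ) ^ 2 with hD
  set q : ℚ := (n.choose k : ℚ) * ((n + k).choose k : ℚ) * (-1) ^ k
      - ((2 * k).choose k : ℚ) ^ 2 / 16 ^ k with hq
  have h16 : q * 16 ^ k = (D : ℚ) := by
    rw [hq, hD]
    push_cast
    field_simp
  have hnum : q.num * 16 ^ k = D * q.den := by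
    have hd : (q.den : ℚ) ≠ 0 := by exact_mod_cast q.den_ne_zero
    have h : (q.num : ℚ) * 16 ^ k = D * q.den := by
      rw [← h16, ← Rat.mul_den_eq_num q]
      ring
    exact_mod_cast h
  have hcop : IsCoprime ((p : ℤ) ^ 2) ((16 : ℤ) ^ k) := by
    apply IsCoprime.pow
    have h2 : IsCoprime (p : ℤ) 2 := ⟨1, -n, by rw [hpn]; push_cast; ring⟩
    have := h2.pow_right (n := 4)
    norm_num at this
    exact this
  push_cast
  apply hcop.dvd_of_dvd_mul_right
  rw [hnum]
  exact Dvd.dvd.mul_right hkey _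
end

section
/- For any positive integer n, (1/(4n·C(2n,n))) · ∑_{k=0}^{n-1} (21k + 8) · C(2k,k)³ = ∑_{k=0}^{n-1} C(n+k-1,k)², where C(a,b) denotes the binomial coefficient. In particular the left-hand side is a positive integer. -/
lemma aux_a (m k : ℕ) : ((m + 1 + k).choose k : ℚ) * (m + 1) = (m + 1 + k) * ((m + k).choose k : ℚ) := by
  have h := Nat.add_one_mul_choose_eq (m + k) m
  have e1 : (m + k).choose m = (m + k).choose k := Nat.choose_symm_add
  have e2 : (m + k + 1).choose (m + 1) = (m + 1 + k).choose k := by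
    rw [show m + k + 1 = (m + 1) + k by ring]; exact Nat.choose_symm_add
  rw [e1, e2] at h
  have h' : (((m + k + 1) * (m + k).choose k : ℕ) : ℚ) = (((m + 1 + k).choose k * (m + 1) : ℕ) : ℚ) := by
    exact_mod_cast h
  push_cast at h'
  linarith

lemma aux_b (m k : ℕ) : ((m + (k + 1)).choose (k + 1) : ℚ) * (k + 1) = (m + 1 + k) * ((m + k).choose k : ℚ) := by
  have h := Nat.add_one_mul_choose_eq (m + k) k
  have h' : (((m + k + 1) * (m + k).choose k : ℕ) : ℚ) = (((m + k + 1).choose (k + 1) * (k + 1) : ℕ) : ℚ) := by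
    exact_mod_cast h
  push_cast at h'
  rw [← add_assoc]
  linarith

lemma aux_tel (m k : ℕ) :
    8 * (2 * (m + 1) + 1) * ∑ j ∈ Finset.range k, ((m + 1 + j).choose j : ℚ) ^ 2
      - 4 * (m + 1) * ∑ j ∈ Finset.range k, ((m + j).choose j : ℚ) ^ 2
      = (12 * (m + 1) + 8 * k) * (k * ((m + k).choose k : ℚ) / (m + 1)) ^ 2 := by
  induction k with
  | zero => simp
  | succ k ih =>
    rw [Finset.sum_range_succ, Finset.sum_range_succ]
    have hm : (m + 1 : ℚ) ≠ 0 := by positivity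
    have ha : ((m + 1 + k).choose k : ℚ) = (m + 1 + k) * ((m + k).choose k : ℚ) / (m + 1) := by
      rw [eq_div_iff hm]; exact aux_a m k
    have hb := aux_b m k
    have hb' : ((k + 1 : ℕ) : ℚ) * ((m + (k + 1)).choose (k + 1) : ℚ)
        = (m + 1 + k) * ((m + k).choose k : ℚ) := by
      rw [← hb]; push_cast; ring
    rw [hb', mul_add (8 * (2 * (m + 1 : ℚ) + 1)), mul_add (4 * (m + 1 : ℚ)), add_sub_add_comm, ih, ha]
    push_cast
    field_simp
    ring

lemma aux_main (m : ℕ) :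
    ∑ k ∈ Finset.range (m + 1), (21 * k + 8 : ℚ) * ((2 * k).choose k : ℚ) ^ 3
      = 4 * (m + 1) * ((2 * (m + 1)).choose (m + 1) : ℚ)
        * ∑ k ∈ Finset.range (m + 1), ((m + k).choose k : ℚ) ^ 2 := by
  induction m with
  | zero => norm_num [Nat.choose]
  | succ m ih =>
    rw [Finset.sum_range_succ, ih, Finset.sum_range_succ (fun k => ((m + 1 + k).choose k : ℚ) ^ 2)]
    have ht := aux_tel m (m + 1)
    have hm : (m + 1 : ℚ) ≠ 0 := by positivity
    have h1 : ((m + (m + 1)).choose (m + 1) : ℚ) = ((2 * (m + 1)).choose (m + 1) : ℚ) / 2 := by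
      have := aux_a m (m + 1)
      rw [show m + 1 + (m + 1) = 2 * (m + 1) by ring] at this
      push_cast at this
      have h2 : (m + 1 : ℚ) * ((2 * (m + 1)).choose (m + 1) : ℚ)
        = (m + 1 : ℚ) * (2 * ((m + (m + 1)).choose (m + 1) : ℚ)) := by linarith
      have := mul_left_cancel₀ hm h2
      linarith
    have h3 : (m + 1 + 1 : ℚ) * ((2 * (m + 1 + 1)).choose (m + 1 + 1) : ℚ)
        = 2 * (2 * (m + 1) + 1) * ((2 * (m + 1)).choose (m + 1) : ℚ) := by
      have := Nat.succ_mul_centralBinom_succ (m + 1)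
      simp only [Nat.centralBinom] at this
      exact_mod_cast this
    rw [h1] at ht
    rw [show m + 1 + (m + 1) = 2 * (m + 1) by ring]
    push_cast at ht ⊢
    rw [mul_div_cancel_left₀ _ hm] at ht
    rw [mul_assoc 4 (m + 1 + 1 : ℚ), h3]
    linear_combination (-((2 * (m + 1)).choose (m + 1) : ℚ)) * ht

theorem stmt18 (n : ℕ) (hn : 0 < n) :
    (1 / (4 * n * ((2 * n).choose n) : ℚ))
        * ∑ k ∈ Finset.range n, (21 * k + 8 : ℚ) * ((2 * k).choose k : ℚ) ^ 3
      = ∑ k ∈ Finset.range n, ((n + k - 1).choose k : ℚ) ^ 2 ∧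
    ∃ m : ℕ, 0 < m ∧
      (1 / (4 * n * ((2 * n).choose n) : ℚ))
          * ∑ k ∈ Finset.range n, (21 * k + 8 : ℚ) * ((2 * k).choose k : ℚ) ^ 3 = m := by
  have key : (1 / (4 * n * ((2 * n).choose n) : ℚ))
        * ∑ k ∈ Finset.range n, (21 * k + 8 : ℚ) * ((2 * k).choose k : ℚ) ^ 3
      = ∑ k ∈ Finset.range n, ((n + k - 1).choose k : ℚ) ^ 2 := by
    obtain ⟨m, rfl⟩ : ∃ m, n = m + 1 := ⟨n - 1, by omega⟩
    have hc : ((2 * (m + 1)).choose (m + 1) : ℚ) ≠ 0 := by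
      exact_mod_cast (Nat.choose_pos (by omega)).ne'
    have hm : (m + 1 : ℚ) ≠ 0 := by positivity
    have e : ∀ k, m + 1 + k - 1 = m + k := fun k => by omega
    simp only [e]
    rw [aux_main m]
    push_cast
    field_simp
  refine ⟨key, ∑ k ∈ Finset.range n, ((n + k - 1).choose k) ^ 2, ?_, ?_⟩
  · apply Finset.sum_pos
    · intro k _
      exact pow_pos (Nat.choose_pos (by omega)) 2
    · exact ⟨0, by simpa using hn⟩
  · rw [key]; push_cast; rfl
end
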